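/- arXiv:2303.10615 — 3 statements merged into one kernel-verified Lean document; each statement's English description precedes it below -/
import Mathlib

section
/- Every cubic simple graph G with n vertices has at most 2^(3n/2) circuit double covers, i.e., ν(G) ≤ 2^(3n/2). -/
namespace CiDC

open SimpleGraph

/-- A circuit in a graph: a connected 2-regular subgraph. -/
def IsCircuit {V : Type*} {G : SimpleGraph V} (H : G.Subgraph) : Prop :=
  H.Connected ∧ ∀ v ∈ H.verts, (H.neighborSet v).ncard = 2

open scoped Classical in
/-- A circuit double cover: a multiset of circuits covering every edge exactly twice
(counted with multiplicity). -/
def IsCiDC {V : Type*} (G : SimpleGraph V) (C : Multiset G.Subgraph) : Prop :=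
  (∀ H ∈ C, IsCircuit H) ∧ ∀ e ∈ G.edgeSet, C.countP (fun H => e ∈ H.edgeSet) = 2

/-- ν(G): the number of circuit double covers of `G`. -/
noncomputable def nu {V : Type*} (G : SimpleGraph V) : ℕ :=
  {C : Multiset G.Subgraph | IsCiDC G C}.ncard

/-- A cubic graph: every vertex has degree 3. -/
def IsCubic {V : Type*} (G : SimpleGraph V) : Prop :=
  ∀ v : V, (G.neighborSet v).ncard = 3


section helpers

variable {V : Type*} {G : SimpleGraph V}

lemma circuit_other {H : G.Subgraph} (hH : IsCircuit H) {u v : V} (h : H.Adj v u) :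
    ∃ x, x ≠ u ∧ H.neighborSet v = {u, x} := by
  obtain ⟨x, y, hxy, hs⟩ := Set.ncard_eq_two.1 (hH.2 v h.fst_mem)
  have hu : u ∈ H.neighborSet v := h
  rw [hs] at hu
  rcases hu with rfl | hu
  · exact ⟨y, hxy.symm, hs⟩
  · have : u = y := hu
    subst this
    exact ⟨x, hxy, by rw [hs, Set.pair_comm]⟩

lemma nbr_three (hc : IsCubic G) {v a b : V} (ha : G.Adj v a) (hb : G.Adj v b) (hab : a ≠ b) :
    ∃ c, c ≠ a ∧ c ≠ b ∧ ∀ x, G.Adj v x ↔ x = a ∨ x = b ∨ x = c := by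
  obtain ⟨x, y, z, hxy, hxz, hyz, hs⟩ := Set.ncard_eq_three.1 (hc v)
  have key : ∀ t, G.Adj v t ↔ t = x ∨ t = y ∨ t = z := by
    intro t
    have : t ∈ G.neighborSet v ↔ t ∈ ({x, y, z} : Set V) := by rw [hs]
    simpa using this
  rcases (key a).1 ha with rfl | rfl | rfl <;> rcases (key b).1 hb with rfl | rfl | rfl
  · exact absurd rfl hab
  · exact ⟨z, by grind⟩
  · exact ⟨y, by grind⟩
  · exact ⟨z, by grind⟩
  · exact absurd rfl hab
  · exact ⟨x, by grind⟩
  · exact ⟨y, by grind⟩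
  · exact ⟨x, by grind⟩
  · exact absurd rfl hab

open scoped Classical in
lemma passage (hc : IsCubic G) {C : Multiset G.Subgraph} (hC : IsCiDC G C) {v a b : V}
    (ha : G.Adj v a) (hb : G.Adj v b) (hab : a ≠ b) :
    C.countP (fun H => H.Adj v a ∧ H.Adj v b) = 1 := by
  obtain ⟨c, hca, hcb, hN⟩ := nbr_three hc ha hb hab
  have hcc : G.Adj v c := (hN c).2 (by simp)
  have h1 : C.countP (fun H => H.Adj v a) = 2 := hC.2 s(v, a) ha
  have h2 : C.countP (fun H => H.Adj v b) = 2 := hC.2 s(v, b) hb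
  have h3 : C.countP (fun H => H.Adj v c) = 2 := hC.2 s(v, c) hcc
  have main : ∀ D : Multiset G.Subgraph, (∀ H ∈ D, IsCircuit H) →
      D.countP (fun H => H.Adj v a) + D.countP (fun H => H.Adj v b) =
      D.countP (fun H => H.Adj v c) + 2 * D.countP (fun H => H.Adj v a ∧ H.Adj v b) := by
    intro D
    induction D using Multiset.induction with
    | empty => simp
    | cons H D ih =>
      intro hD
      have ih' := ih (fun K hK => hD K (Multiset.mem_cons_of_mem hK))
      have hH := hD H (Multiset.mem_cons_self H D)
      simp only [Multiset.countP_cons]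
      have o : ∀ t, H.Adj v t → ∃ x, x ≠ t ∧ ∀ y, H.Adj v y ↔ y = t ∨ y = x := by
        intro t ht
        obtain ⟨x, hx, hs⟩ := circuit_other hH ht
        refine ⟨x, hx, fun y => ?_⟩
        have : y ∈ H.neighborSet v ↔ y ∈ ({t, x} : Set V) := by rw [hs]
        simpa using this
      have sub : ∀ y, H.Adj v y → y = a ∨ y = b ∨ y = c := fun y hy => (hN y).1 hy.adj_sub
      by_cases pa : H.Adj v a
      · obtain ⟨x, hx, hs⟩ := o a pa
        rcases sub x ((hs x).2 (Or.inr rfl)) with rfl | rfl | rfl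
        · exact absurd rfl hx
        · simp [hs, hca, hcb, hab]; omega
        · simp [hs, hca, hcb, hab, hab.symm, hcb.symm]; omega
      · by_cases pb : H.Adj v b
        · obtain ⟨x, hx, hs⟩ := o b pb
          rcases sub x ((hs x).2 (Or.inr rfl)) with rfl | rfl | rfl
          · exact absurd ((hs x).2 (Or.inr rfl)) pa
          · exact absurd rfl hx
          · simp [hs, hab, hca.symm]; omega
        · have pc : ¬ H.Adj v c := by
            intro pc
            obtain ⟨x, hx, hs⟩ := o c pc
            rcases sub x ((hs x).2 (Or.inr rfl)) with rfl | rfl | rfl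
            · exact pa ((hs x).2 (Or.inr rfl))
            · exact pb ((hs x).2 (Or.inr rfl))
            · exact hx rfl
          simp [pa, pb, pc]; omega
  have := main C hC.1
  omega

lemma passage_exists (hc : IsCubic G) {C : Multiset G.Subgraph} (hC : IsCiDC G C) {v a b : V}
    (ha : G.Adj v a) (hb : G.Adj v b) (hab : a ≠ b) :
    ∃ H ∈ C, H.Adj v a ∧ H.Adj v b := by
  classical
  have h := passage hc hC ha hb hab
  have : 0 < C.countP (fun H => H.Adj v a ∧ H.Adj v b) := by
    convert Nat.one_pos
  exact Multiset.countP_pos.1 this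

lemma passage_unique (hc : IsCubic G) {C : Multiset G.Subgraph} (hC : IsCiDC G C) {v a b : V}
    (hab : a ≠ b) {H K : G.Subgraph} (hH : H ∈ C) (hK : K ∈ C)
    (h1 : H.Adj v a) (h2 : H.Adj v b) (h3 : K.Adj v a) (h4 : K.Adj v b) : H = K := by
  classical
  have h := passage hc hC h1.adj_sub h2.adj_sub hab
  rw [Multiset.countP_eq_card_filter, Multiset.card_eq_one] at h
  obtain ⟨L, hL⟩ := h
  have e1 : H ∈ ({L} : Multiset G.Subgraph) := by
    rw [← hL]; exact Multiset.mem_filter.2 ⟨hH, h1, h2⟩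
  have e2 : K ∈ ({L} : Multiset G.Subgraph) := by
    rw [← hL]; exact Multiset.mem_filter.2 ⟨hK, h3, h4⟩
  rw [Multiset.mem_singleton] at e1 e2
  rw [e1, e2]

lemma circuit_start {H : G.Subgraph} (hH : IsCircuit H) :
    ∃ v a b, a ≠ b ∧ H.neighborSet v = {a, b} := by
  obtain ⟨v, hv⟩ := hH.1.nonempty
  obtain ⟨x, y, hxy, hs⟩ := Set.ncard_eq_two.1 (hH.2 v hv)
  exact ⟨v, x, y, hxy, hs⟩

lemma cidc_nodup (hc : IsCubic G) {C : Multiset G.Subgraph} (hC : IsCiDC G C) : C.Nodup := by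
  classical
  rw [Multiset.nodup_iff_count_le_one]
  intro H
  by_cases hH : H ∈ C
  · obtain ⟨v, a, b, hab, hs⟩ := circuit_start (hC.1 H hH)
    have ha : H.Adj v a := by
      change a ∈ H.neighborSet v
      rw [hs]; simp
    have hb : H.Adj v b := by
      change b ∈ H.neighborSet v
      rw [hs]; simp
    rw [← passage hc hC ha.adj_sub hb.adj_sub hab, Multiset.count, Multiset.countP_eq_card_filter,
      Multiset.countP_eq_card_filter]
    apply Multiset.card_le_card
    apply Multiset.monotone_filter_right
    rintro K rfl
    exact ⟨ha, hb⟩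
  · rw [Multiset.count_eq_zero_of_notMem hH]; exact Nat.zero_le _

/-- The cover `C` has a circuit going along `a, u, v, b`. -/
def Thru (C : Multiset G.Subgraph) (a u v b : V) : Prop :=
  ∃ H ∈ C, H.Adj u a ∧ H.Adj u v ∧ H.Adj v b

lemma thru_symm {C : Multiset G.Subgraph} {a u v b : V} : Thru C a u v b ↔ Thru C b v u a := by
  constructor <;> rintro ⟨H, hH, h1, h2, h3⟩ <;> exact ⟨H, hH, h3, h2.symm, h1⟩

lemma thru_flip (hc : IsCubic G) {C : Multiset G.Subgraph} (hC : IsCiDC G C) {a u v b c : V}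
    (huv : G.Adj u v) (ha : G.Adj u a) (hav : a ≠ v) (hb : G.Adj v b) (hbu : b ≠ u)
    (hcv : G.Adj v c) (hcu : c ≠ u) (hbc : b ≠ c) : Thru C a u v b ↔ ¬ Thru C a u v c := by
  constructor
  · rintro ⟨H, hH, h1, h2, h3⟩ ⟨K, hK, k1, k2, k3⟩
    obtain rfl := passage_unique hc hC hav hH hK h1 h2 k1 k2
    obtain ⟨x, hx, hs⟩ := circuit_other (hC.1 H hH) h2.symm
    have e1 : b ∈ H.neighborSet v := h3
    have e2 : c ∈ H.neighborSet v := k3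
    rw [hs] at e1 e2
    simp only [Set.mem_insert_iff, Set.mem_singleton_iff] at e1 e2
    grind
  · intro hn
    obtain ⟨H, hH, h1, h2⟩ := passage_exists hc hC ha huv hav
    obtain ⟨x, hx, hs⟩ := circuit_other (hC.1 H hH) h2.symm
    have hvx : H.Adj v x := by
      change x ∈ H.neighborSet v
      rw [hs]; simp
    obtain ⟨d, -, -, hN⟩ := nbr_three hc hb hcv hbc
    have hd : d = u := by
      rcases (hN u).1 huv.symm with h | h | h
      · exact absurd h.symm hbu
      · exact absurd h.symm hcu
      · exact h.symm
    rcases (hN x).1 hvx.adj_sub with rfl | rfl | rfl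
    · exact ⟨H, hH, h1, h2, hvx⟩
    · exact absurd ⟨H, hH, h1, h2, hvx⟩ hn
    · exact absurd hd hx

lemma thru_transfer (hc : IsCubic G) {C D : Multiset G.Subgraph} (hC : IsCiDC G C)
    (hD : IsCiDC G D) {a u v b a' b' : V}
    (huv : G.Adj u v) (ha : G.Adj u a) (hav : a ≠ v) (hb : G.Adj v b) (hbu : b ≠ u)
    (ha' : G.Adj u a') (hav' : a' ≠ v) (hb' : G.Adj v b') (hbu' : b' ≠ u)
    (h : Thru C a u v b ↔ Thru D a u v b) : Thru C a' u v b' ↔ Thru D a' u v b' := by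
  have h1 : Thru C a u v b' ↔ Thru D a u v b' := by
    by_cases e : b = b'
    · rwa [← e]
    · rw [thru_flip hc hC huv ha hav hb hbu hb' hbu' e,
        thru_flip hc hD huv ha hav hb hbu hb' hbu' e] at h
      exact not_iff_not.1 h
  by_cases e : a = a'
  · rwa [← e]
  · rw [thru_symm, thru_symm (C := D)] at h1 ⊢
    rw [thru_flip hc hC huv.symm hb' hbu' ha hav ha' hav' e,
      thru_flip hc hD huv.symm hb' hbu' ha hav ha' hav' e] at h1
    exact not_iff_not.1 h1

lemma circuit_le (hc : IsCubic G) {C D : Multiset G.Subgraph} (hC : IsCiDC G C)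
    (hD : IsCiDC G D) (hT : ∀ a u v b, G.Adj u v → G.Adj u a → a ≠ v → G.Adj v b → b ≠ u →
      Thru C a u v b → Thru D a u v b)
    {H K : G.Subgraph} (hH : H ∈ C) (hK : K ∈ D) {r : V} (hr : r ∈ H.verts)
    (hrs : H.neighborSet r = K.neighborSet r) : H ≤ K := by
  have step : ∀ u v, H.Adj u v → H.neighborSet u = K.neighborSet u →
      H.neighborSet v = K.neighborSet v := by
    intro u v huv he
    obtain ⟨a, hav, hsu⟩ := circuit_other (hC.1 H hH) huv
    obtain ⟨b, hbu, hsv⟩ := circuit_other (hC.1 H hH) huv.symm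
    have hua : H.Adj u a := by
      change a ∈ H.neighborSet u
      rw [hsu]; simp
    have hvb : H.Adj v b := by
      change b ∈ H.neighborSet v
      rw [hsv]; simp
    obtain ⟨L, hL, l1, l2, l3⟩ := hT a u v b huv.adj_sub hua.adj_sub hav hvb.adj_sub hbu
      ⟨H, hH, hua, huv, hvb⟩
    have k1 : K.Adj u a := by
      change a ∈ K.neighborSet u
      rw [← he]; exact hua
    have k2 : K.Adj u v := by
      change v ∈ K.neighborSet u
      rw [← he]; exact huv
    obtain rfl := passage_unique hc hD hav hL hK l1 l2 k1 k2
    obtain ⟨x, hx, hs⟩ := circuit_other (hD.1 L hL) l2.symm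
    have : b ∈ L.neighborSet v := l3
    rw [hs] at this
    rcases this with h | h
    · exact absurd h hbu
    · have : b = x := h
      rw [hs, hsv, this]
  have all : ∀ w : H.verts, H.neighborSet w = K.neighborSet w := by
    intro w
    have hreach : H.coe.Reachable ⟨r, hr⟩ w := hH |> hC.1 H |>.1.coe.preconnected _ _
    obtain ⟨p⟩ := hreach
    have : ∀ (x y : H.verts), H.coe.Walk x y → H.neighborSet x = K.neighborSet x →
        H.neighborSet y = K.neighborSet y := by
      intro x y p
      induction p with
      | nil => exact id
      | cons h p ih => exact fun hx => ih (step _ _ h hx)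
    exact this _ _ p hrs
  have adj : ∀ u v, H.Adj u v → K.Adj u v := by
    intro u v h
    have := all ⟨u, h.fst_mem⟩
    change v ∈ K.neighborSet u
    rw [← this]; exact h
  refine ⟨fun w hw => ?_, fun u v h => adj u v h⟩
  obtain ⟨x, y, hxy, hs⟩ := Set.ncard_eq_two.1 ((hC.1 H hH).2 w hw)
  have hx : H.Adj w x := by
    change x ∈ H.neighborSet w
    rw [hs]; simp
  exact (adj _ _ hx).fst_mem

lemma cover_sub (hc : IsCubic G) {C D : Multiset G.Subgraph} (hC : IsCiDC G C)
    (hD : IsCiDC G D) (hT : ∀ a u v b, G.Adj u v → G.Adj u a → a ≠ v → G.Adj v b → b ≠ u →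
      (Thru C a u v b ↔ Thru D a u v b)) {H : G.Subgraph} (hH : H ∈ C) : H ∈ D := by
  obtain ⟨v, a, b, hab, hs⟩ := circuit_start (hC.1 H hH)
  have ha : H.Adj v a := by
    change a ∈ H.neighborSet v
    rw [hs]; simp
  have hb : H.Adj v b := by
    change b ∈ H.neighborSet v
    rw [hs]; simp
  obtain ⟨K, hK, k1, k2⟩ := passage_exists hc hD ha.adj_sub hb.adj_sub hab
  have e : H.neighborSet v = K.neighborSet v := by
    obtain ⟨x, hx, hs'⟩ := circuit_other (hD.1 K hK) k1
    have : b ∈ K.neighborSet v := k2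
    rw [hs'] at this
    rcases this with h | h
    · exact absurd h.symm hab
    · have : b = x := h
      rw [hs, hs', this]
  have l1 := circuit_le hc hC hD (fun a u v b h1 h2 h3 h4 h5 => (hT a u v b h1 h2 h3 h4 h5).1)
    hH hK ha.fst_mem e
  have l2 := circuit_le hc hD hC (fun a u v b h1 h2 h3 h4 h5 => (hT a u v b h1 h2 h3 h4 h5).2)
    hK hH k1.fst_mem e.symm
  rwa [le_antisymm l1 l2]

lemma exists_other (hc : IsCubic G) (u v : V) : ∃ a, G.Adj u a ∧ a ≠ v := by
  have h : 1 < (G.neighborSet u).ncard := by rw [hc u]; norm_num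
  obtain ⟨a, ha, hav⟩ := Set.exists_ne_of_one_lt_ncard h v
  exact ⟨a, ha, hav⟩

lemma exists_quad (hc : IsCubic G) (e : G.edgeSet) : ∃ q : V × V × V × V,
    e.1 = s(q.2.1, q.2.2.1) ∧ G.Adj q.2.1 q.2.2.1 ∧ G.Adj q.2.1 q.1 ∧ q.1 ≠ q.2.2.1 ∧
      G.Adj q.2.2.1 q.2.2.2 ∧ q.2.2.2 ≠ q.2.1 := by
  obtain ⟨e, he⟩ := e
  induction e using Sym2.ind with
  | _ u v =>
    obtain ⟨a, ha, hav⟩ := exists_other hc u v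
    obtain ⟨b, hb, hbu⟩ := exists_other hc v u
    exact ⟨(a, u, v, b), rfl, he, ha, hav, hb, hbu⟩

lemma card_edges [Fintype V] (hc : IsCubic G) :
    Nat.card G.edgeSet = 3 * Fintype.card V / 2 := by
  classical
  have h := G.sum_degrees_eq_twice_card_edges
  have hd : ∀ v, G.degree v = 3 := by
    intro v
    rw [← hc v, ← G.card_neighborSet_eq_degree v, Set.ncard_eq_toFinset_card', Set.toFinset_card]
  simp only [hd, Finset.sum_const, smul_eq_mul, Finset.card_univ] at h
  rw [Nat.card_eq_fintype_card, ← SimpleGraph.edgeFinset_card]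
  omega

end helpers

/-- Every cubic simple graph with `n` vertices has at most `2^(3n/2)` circuit double covers. -/
theorem stmt0 {V : Type*} [Fintype V] (G : SimpleGraph V) (hcubic : IsCubic G) :
    nu G ≤ 2 ^ (3 * Fintype.card V / 2) := by
  classical
  choose q hq using exists_quad hcubic
  let F : Multiset G.Subgraph → Set G.edgeSet :=
    fun C => {e | Thru C (q e).1 (q e).2.1 (q e).2.2.1 (q e).2.2.2}
  have hinj : Set.InjOn F {C : Multiset G.Subgraph | IsCiDC G C} := by
    intro C hC D hD hF
    have hC' : IsCiDC G C := hC
    have hD' : IsCiDC G D := hD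
    have hT : ∀ a u v b, G.Adj u v → G.Adj u a → a ≠ v → G.Adj v b → b ≠ u →
        (Thru C a u v b ↔ Thru D a u v b) := by
      intro a u v b huv ha hav hb hbu
      have hm : Thru C _ _ _ _ ↔ Thru D _ _ _ _ := Set.ext_iff.1 hF ⟨s(u, v), huv⟩
      obtain ⟨h0, h1, h2, h3, h4, h5⟩ := hq ⟨s(u, v), huv⟩
      generalize q ⟨s(u, v), huv⟩ = t at *
      obtain ⟨a', u', v', b'⟩ := t
      simp only at *
      rcases Sym2.eq_iff.1 h0 with ⟨rfl, rfl⟩ | ⟨rfl, rfl⟩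
      · exact thru_transfer hcubic hC' hD' huv h2 h3 h4 h5 ha hav hb hbu hm
      · rw [thru_symm, thru_symm (C := D)]
        exact thru_transfer hcubic hC' hD' huv.symm h2 h3 h4 h5 hb hbu ha hav hm
    refine (Multiset.Nodup.ext (cidc_nodup hcubic hC') (cidc_nodup hcubic hD')).2 fun H => ?_
    exact ⟨cover_sub hcubic hC' hD' hT, cover_sub hcubic hD' hC'
      (fun a u v b h1 h2 h3 h4 h5 => (hT a u v b h1 h2 h3 h4 h5).symm)⟩
  have hle := Set.ncard_le_ncard_of_injOn F (t := Set.univ) (fun _ _ => Set.mem_univ _) hinj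
    (Set.toFinite _)
  rw [Set.ncard_univ, Nat.card_eq_fintype_card, Fintype.card_set, ← Nat.card_eq_fintype_card,
    card_edges hcubic] at hle
  exact hle

end CiDC
end

section
/- Let G1 and G2 be cubic simple graphs on disjoint vertex sets, let e1 = x1y1 be an edge of G1 and e2 = x2y2 an edge of G2, and let G be the graph obtained from the disjoint union of G1 − e1 and G2 − e2 by adding the two new edges x1x2 and y1y2 (so that {x1x2, y1y2} is a 2-edge-cut of G). Then ν(G) = 2 · ν(G1) · ν(G2). -/
namespace CiDC

open SimpleGraph

lemma conn_iff {V : Type*} {G : SimpleGraph V} (H : G.Subgraph) :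
    H.Connected ↔ H.verts.Nonempty ∧
      ∀ u ∈ H.verts, ∀ v ∈ H.verts, Relation.ReflTransGen H.Adj u v := by
  constructor
  · intro h
    refine ⟨h.nonempty, fun u hu v hv => ?_⟩
    have h1 := h.preconnected.coe ⟨u, hu⟩ ⟨v, hv⟩
    rw [SimpleGraph.reachable_iff_reflTransGen] at h1
    exact Relation.ReflTransGen.lift (r := H.coe.Adj) (p := H.Adj) Subtype.val (fun a b hab => hab) _ _ h1
  · rintro ⟨hn, h⟩
    rw [Subgraph.connected_iff']
    have : Nonempty H.verts := hn.to_subtype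
    refine ⟨fun u v => ?_⟩
    have key : ∀ w, Relation.ReflTransGen H.Adj u.1 w → ∃ hw : w ∈ H.verts,
        H.coe.Reachable u ⟨w, hw⟩ := by
      intro w hw
      induction hw with
      | refl => exact ⟨u.2, Reachable.refl _⟩
      | tail _ hab ih =>
        obtain ⟨hb, hr⟩ := ih
        refine ⟨H.edge_vert hab.symm, hr.trans ?_⟩
        exact Adj.reachable (by simpa using hab)
    exact (key v.1 (h _ u.2 _ v.2)).2

/-- A circuit minus an edge is still connected. -/
lemma circuit_delete {V : Type*} [Finite V] {G : SimpleGraph V} {H : G.Subgraph}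
    (hH : IsCircuit H) {x y : V} (hxy : H.Adj x y) {u v : V} (hu : u ∈ H.verts)
    (hv : v ∈ H.verts) :
    Relation.ReflTransGen (fun a b => H.Adj a b ∧ s(a, b) ≠ s(x, y)) u v := by
  have hc : H.spanningCoe.IsCycles := by
    intro w hw
    obtain ⟨z, hz⟩ := hw
    have : H.spanningCoe.neighborSet w = H.neighborSet w := by ext; simp
    rw [this]
    exact hH.2 w (H.edge_vert (by simpa using hz))
  have hr := hc.reachable_deleteEdges (v := x) (w := y) (by simpa using hxy)
  rw [SimpleGraph.reachable_iff_reflTransGen] at hr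
  have hr' : Relation.ReflTransGen (fun a b => H.Adj a b ∧ s(a, b) ≠ s(x, y)) x y := by
    refine Relation.ReflTransGen.mono ?_ _ _ hr
    intro a b hab
    simpa using hab
  have hsymm : ∀ a b, Relation.ReflTransGen (fun a b => H.Adj a b ∧ s(a, b) ≠ s(x, y)) a b →
      Relation.ReflTransGen (fun a b => H.Adj a b ∧ s(a, b) ≠ s(x, y)) b a := by
    intro a b hab
    have : Std.Symm (fun a b => H.Adj a b ∧ s(a, b) ≠ s(x, y)) :=
      ⟨fun a b h => ⟨h.1.symm, by rw [Sym2.eq_swap]; exact h.2⟩⟩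
    exact symm hab
  have h := ((conn_iff H).1 hH.1).2 u hu v hv
  induction h with
  | refl => exact .refl
  | @tail b c _ hbc ih =>
    refine (ih (H.edge_vert hbc)).trans ?_
    by_cases he : s(b, c) = s(x, y)
    · rw [Sym2.eq_iff] at he
      rcases he with ⟨rfl, rfl⟩ | ⟨rfl, rfl⟩
      · exact hr'
      · exact hsymm _ _ hr'
    · exact .single ⟨hbc, he⟩

open scoped Classical in
lemma isCiDC_iff {V : Type*} (G : SimpleGraph V) (C : Multiset G.Subgraph) :
    IsCiDC G C ↔ (∀ H ∈ C, IsCircuit H) ∧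
      ∀ u v, G.Adj u v → C.countP (fun H => H.Adj u v) = 2 := by
  unfold IsCiDC
  refine and_congr Iff.rfl ⟨fun h u v huv => ?_, fun h e => ?_⟩
  · simpa using h s(u, v) huv
  · induction e with | _ u v => ?_
    intro he
    simpa using h u v he

/-- In a double cover of a cubic graph, the two circuits through an edge are different. -/
lemma cubic_ne {V : Type*} {G : SimpleGraph V} (hc : IsCubic G) {x y : V}
    {A B : G.Subgraph} {R : Multiset G.Subgraph} (h : IsCiDC G (A ::ₘ B ::ₘ R))
    (hA : A.Adj x y) (hB : B.Adj x y) : A ≠ B := by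
  classical
  rintro rfl
  rw [isCiDC_iff] at h
  obtain ⟨h1, h2⟩ := h
  have hA2 := (h1 A (by simp)).2 x (A.edge_vert hA)
  have hx := hc x
  have hfin : (G.neighborSet x).Finite := Set.finite_of_ncard_pos (by omega)
  have hsub : A.neighborSet x ⊆ G.neighborSet x := fun z hz => A.adj_sub hz
  have hd : (G.neighborSet x \ A.neighborSet x).ncard = 1 := by
    rw [Set.ncard_sdiff hsub (hfin.subset hsub), hx, hA2]
  obtain ⟨z, hz⟩ := Set.ncard_eq_one.1 hd
  have hzm : z ∈ G.neighborSet x \ A.neighborSet x := by rw [hz]; rfl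
  have c1 := h2 x z hzm.1
  rw [Multiset.countP_cons_of_neg (p := fun H : G.Subgraph => H.Adj x z) _ hzm.2,
    Multiset.countP_cons_of_neg (p := fun H : G.Subgraph => H.Adj x z) _ hzm.2] at c1
  obtain ⟨H, hHR, hHz⟩ := Multiset.countP_pos.1 (by omega : 0 < R.countP (fun H => H.Adj x z))
  have hH2 := (h1 H (by simp [hHR])).2 x (H.edge_vert hHz)
  obtain ⟨w, hw, hwz⟩ := Set.exists_ne_of_one_lt_ncard (s := H.neighborSet x) (by omega) z
  have hwA : A.Adj x w := by
    by_contra hn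
    have : w ∈ G.neighborSet x \ A.neighborSet x := ⟨H.adj_sub hw, hn⟩
    rw [hz] at this
    exact hwz this
  have c2 := h2 x w (A.adj_sub hwA)
  rw [Multiset.countP_cons_of_pos (p := fun H : G.Subgraph => H.Adj x w) _ hwA,
    Multiset.countP_cons_of_pos (p := fun H : G.Subgraph => H.Adj x w) _ hwA] at c2
  have : 0 < R.countP (fun H => H.Adj x w) := Multiset.countP_pos.2 ⟨H, hHR, hw⟩
  omega

/-- Double covers with an ordering of the two circuits through a given edge. -/
abbrev Trip {V : Type*} (G : SimpleGraph V) (x y : V) : Type _ :=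
  {p : G.Subgraph × G.Subgraph × Multiset G.Subgraph //
    IsCiDC G (p.1 ::ₘ p.2.1 ::ₘ p.2.2) ∧ p.1.Adj x y ∧ p.2.1.Adj x y}

lemma rest_not {V : Type*} {G : SimpleGraph V} {x y : V}
    {A B : G.Subgraph} {R : Multiset G.Subgraph} (h : IsCiDC G (A ::ₘ B ::ₘ R))
    (hA : A.Adj x y) (hB : B.Adj x y) : ∀ H ∈ R, ¬ H.Adj x y := by
  classical
  intro H hH hxy
  have c := ((isCiDC_iff _ _).1 h).2 x y (A.adj_sub hA)
  rw [Multiset.countP_cons_of_pos (p := fun H : G.Subgraph => H.Adj x y) _ hA,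
    Multiset.countP_cons_of_pos (p := fun H : G.Subgraph => H.Adj x y) _ hB] at c
  have : 0 < R.countP (fun H => H.Adj x y) := Multiset.countP_pos.2 ⟨H, hH, hxy⟩
  omega

lemma card_trip {V : Type*} {G : SimpleGraph V} (hc : IsCubic G) {x y : V} (hxy : G.Adj x y) :
    Nat.card (Trip G x y) = 2 * nu G := by
  classical
  have hex : ∀ C : {C : Multiset G.Subgraph | IsCiDC G C}, ∃ t : Trip G x y,
      t.1.1 ::ₘ t.1.2.1 ::ₘ t.1.2.2 = C.1 := by
    rintro ⟨C, hC⟩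
    have h2 := ((isCiDC_iff _ _).1 hC).2 x y hxy
    rw [Multiset.countP_eq_card_filter, Multiset.card_eq_two] at h2
    obtain ⟨A, B, hAB⟩ := h2
    have hs := Multiset.filter_add_not (fun H : G.Subgraph => H.Adj x y) C
    have hA : A ∈ C.filter (fun H : G.Subgraph => H.Adj x y) := by rw [hAB]; simp
    have hB : B ∈ C.filter (fun H : G.Subgraph => H.Adj x y) := by rw [hAB]; simp
    have he : A ::ₘ B ::ₘ C.filter (fun H : G.Subgraph => ¬ H.Adj x y) = C := by
      rw [hAB] at hs
      simpa using hs
    refine ⟨⟨(A, B, C.filter (fun H : G.Subgraph => ¬ H.Adj x y)), ?_, ?_, ?_⟩, he⟩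
    · dsimp only
      rw [he]; exact hC
    · exact (Multiset.mem_filter.1 hA).2
    · exact (Multiset.mem_filter.1 hB).2
  choose f hf using hex
  let F : {C : Multiset G.Subgraph | IsCiDC G C} × Bool → Trip G x y := fun q =>
    if q.2 then f q.1 else ⟨((f q.1).1.2.1, (f q.1).1.1, (f q.1).1.2.2), by
      obtain ⟨h1, h2, h3⟩ := (f q.1).2
      refine ⟨?_, h3, h2⟩
      dsimp only
      rw [Multiset.cons_swap]
      exact h1⟩
  have hF : ∀ q, (F q).1.1 ::ₘ (F q).1.2.1 ::ₘ (F q).1.2.2 = q.1.1 := by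
    rintro ⟨C, b⟩
    cases b
    · simp only [F]
      rw [← hf C, Multiset.cons_swap]
      rfl
    · simp only [F]
      rw [← hf C]
      rfl
  have hbij : Function.Bijective F := by
    constructor
    · rintro ⟨C, b⟩ ⟨C', b'⟩ h
      have hCC : C = C' := by
        apply Subtype.ext
        rw [← hF (C, b), ← hF (C', b'), h]
      subst hCC
      have hne := cubic_ne hc (f C).2.1 (f C).2.2.1 (f C).2.2.2
      have h' := congrArg (fun t => t.1.1) h
      cases b <;> cases b' <;> simp [F] at h' ⊢
      · exact hne h'.symm
      · exact hne h'
    · intro t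
      let C : {C : Multiset G.Subgraph | IsCiDC G C} := ⟨_, t.2.1⟩
      have hfilt : ∀ s : Trip G x y, s.1.1 ::ₘ s.1.2.1 ::ₘ s.1.2.2 = C.1 →
          C.1.filter (fun H => H.Adj x y) = {s.1.1, s.1.2.1} ∧
          C.1.filter (fun H => ¬ H.Adj x y) = s.1.2.2 := by
        intro s hs
        have hr := rest_not s.2.1 s.2.2.1 s.2.2.2
        have hA := s.2.2.1
        have hB := s.2.2.2
        rw [← hs]
        constructor
        · rw [Multiset.filter_cons_of_pos (p := fun H : G.Subgraph => H.Adj x y) _ hA, Multiset.filter_cons_of_pos (p := fun H : G.Subgraph => H.Adj x y) _ hB,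
            Multiset.filter_eq_nil.2 hr]
          rfl
        · rw [Multiset.filter_cons_of_neg (p := fun H : G.Subgraph => ¬ H.Adj x y) _ (by simpa using hA),
            Multiset.filter_cons_of_neg (p := fun H : G.Subgraph => ¬ H.Adj x y) _ (by simpa using hB),
            Multiset.filter_eq_self.2 hr]
      have ht := hfilt t rfl
      have hfC := hfilt (f C) (hf C)
      have hR := hfC.2.symm.trans ht.2
      have hAB := hfC.1.symm.trans ht.1
      have hAB' : (f C).1.1 = t.1.1 ∧ (f C).1.2.1 = t.1.2.1 ∨
          (f C).1.1 = t.1.2.1 ∧ (f C).1.2.1 = t.1.1 := by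
        rcases Multiset.cons_eq_cons.1 hAB with ⟨h1, h2⟩ | ⟨_, cs, h1, h2⟩
        · exact .inl ⟨h1, by simpa using h2⟩
        · have hc := congrArg Multiset.card h1
          have : cs = 0 := by simpa using hc
          subst this
          exact .inr ⟨by simpa using h2.symm, by simpa using h1⟩
      rcases hAB' with ⟨ha, hb⟩ | ⟨ha, hb⟩
      · refine ⟨(C, true), ?_⟩
        apply Subtype.ext
        exact Prod.ext ha (Prod.ext hb hR)
      · refine ⟨(C, false), ?_⟩
        apply Subtype.ext
        exact Prod.ext hb (Prod.ext ha hR)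
  rw [← Nat.card_eq_of_bijective F hbij, Nat.card_prod, mul_comm]
  simp [nu, Nat.card_coe_set_eq]

open scoped Classical in
lemma count_edge {V : Type*} {G : SimpleGraph V} {A B : G.Subgraph} {R : Multiset G.Subgraph}
    {x y : V} (hA : A.Adj x y) (hB : B.Adj x y) (hR : ∀ H ∈ R, ¬ H.Adj x y) :
    (A ::ₘ B ::ₘ R).countP (fun H => H.Adj x y) = 2 := by
  rw [Multiset.countP_cons_of_pos (p := fun H : G.Subgraph => H.Adj x y) _ hA,
    Multiset.countP_cons_of_pos (p := fun H : G.Subgraph => H.Adj x y) _ hB,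
    Multiset.countP_eq_zero.2 hR]

/-- Two graphs glued across a 2-edge-cut, with abstract embeddings of the two sides. -/
structure Glued {V₁ V₂ V : Type*} (i : V₁ → V) (j : V₂ → V) (G₁ : SimpleGraph V₁)
    (G₂ : SimpleGraph V₂) (G : SimpleGraph V) (x₁ y₁ : V₁) (x₂ y₂ : V₂) : Prop where
  injI : Function.Injective i
  injJ : Function.Injective j
  disj : ∀ u v, i u ≠ j v
  cov : ∀ w, (∃ u, w = i u) ∨ (∃ v, w = j v)
  adjI : ∀ u v, G.Adj (i u) (i v) ↔ G₁.Adj u v ∧ s(u, v) ≠ s(x₁, y₁)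
  adjJ : ∀ u v, G.Adj (j u) (j v) ↔ G₂.Adj u v ∧ s(u, v) ≠ s(x₂, y₂)
  adjC : ∀ u v, G.Adj (i u) (j v) ↔ (u = x₁ ∧ v = x₂) ∨ (u = y₁ ∧ v = y₂)
  e1 : G₁.Adj x₁ y₁
  e2 : G₂.Adj x₂ y₂

namespace Glued

variable {V₁ V₂ V : Type*} {i : V₁ → V} {j : V₂ → V} {G₁ : SimpleGraph V₁}
    {G₂ : SimpleGraph V₂} {G : SimpleGraph V} {x₁ y₁ : V₁} {x₂ y₂ : V₂}

lemma swap (h : Glued i j G₁ G₂ G x₁ y₁ x₂ y₂) : Glued j i G₂ G₁ G x₂ y₂ x₁ y₁ where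
  injI := h.injJ
  injJ := h.injI
  disj u v := (h.disj v u).symm
  cov w := (h.cov w).symm
  adjI := h.adjJ
  adjJ := h.adjI
  adjC u v := by rw [G.adj_comm, h.adjC]; tauto
  e1 := h.e2
  e2 := h.e1

lemma flip (h : Glued i j G₁ G₂ G x₁ y₁ x₂ y₂) : Glued i j G₁ G₂ G y₁ x₁ y₂ x₂ where
  injI := h.injI
  injJ := h.injJ
  disj := h.disj
  cov := h.cov
  adjI u v := by rw [h.adjI, Sym2.eq_swap (a := x₁)]
  adjJ u v := by rw [h.adjJ, Sym2.eq_swap (a := x₂)]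
  adjC u v := by rw [h.adjC]; tauto
  e1 := h.e1.symm
  e2 := h.e2.symm

/-- Glue two subgraphs; the cut edges are used iff both contain their special edges. -/
def glue (h : Glued i j G₁ G₂ G x₁ y₁ x₂ y₂) (A₁ : G₁.Subgraph) (A₂ : G₂.Subgraph) :
    G.Subgraph where
  verts := i '' A₁.verts ∪ j '' A₂.verts
  Adj a b := (∃ u v, a = i u ∧ b = i v ∧ A₁.Adj u v ∧ s(u, v) ≠ s(x₁, y₁)) ∨
    (∃ u v, a = j u ∧ b = j v ∧ A₂.Adj u v ∧ s(u, v) ≠ s(x₂, y₂)) ∨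
    (A₁.Adj x₁ y₁ ∧ A₂.Adj x₂ y₂ ∧
      ((a = i x₁ ∧ b = j x₂) ∨ (a = j x₂ ∧ b = i x₁) ∨
       (a = i y₁ ∧ b = j y₂) ∨ (a = j y₂ ∧ b = i y₁)))
  adj_sub := by
    rintro a b (⟨u, v, rfl, rfl, h1, h2⟩ | ⟨u, v, rfl, rfl, h1, h2⟩ |
      ⟨h1, h2, ⟨rfl, rfl⟩ | ⟨rfl, rfl⟩ | ⟨rfl, rfl⟩ | ⟨rfl, rfl⟩⟩)
    · exact (h.adjI _ _).2 ⟨A₁.adj_sub h1, h2⟩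
    · exact (h.adjJ _ _).2 ⟨A₂.adj_sub h1, h2⟩
    · exact (h.adjC _ _).2 (by simp)
    · exact ((h.adjC _ _).2 (by simp)).symm
    · exact (h.adjC _ _).2 (by simp)
    · exact ((h.adjC _ _).2 (by simp)).symm
  edge_vert := by
    rintro a b (⟨u, v, rfl, rfl, h1, h2⟩ | ⟨u, v, rfl, rfl, h1, h2⟩ |
      ⟨h1, h2, ⟨rfl, rfl⟩ | ⟨rfl, rfl⟩ | ⟨rfl, rfl⟩ | ⟨rfl, rfl⟩⟩)
    · exact .inl ⟨_, A₁.edge_vert h1, rfl⟩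
    · exact .inr ⟨_, A₂.edge_vert h1, rfl⟩
    · exact .inl ⟨_, A₁.edge_vert h1, rfl⟩
    · exact .inr ⟨_, A₂.edge_vert h2, rfl⟩
    · exact .inl ⟨_, A₁.edge_vert h1.symm, rfl⟩
    · exact .inr ⟨_, A₂.edge_vert h2.symm, rfl⟩
  symm := by
    constructor
    rintro a b (⟨u, v, rfl, rfl, h1, h2⟩ | ⟨u, v, rfl, rfl, h1, h2⟩ | ⟨h1, h2, h3⟩)
    · exact .inl ⟨v, u, rfl, rfl, h1.symm, by rwa [Sym2.eq_swap]⟩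
    · exact .inr (.inl ⟨v, u, rfl, rfl, h1.symm, by rwa [Sym2.eq_swap]⟩)
    · exact .inr (.inr ⟨h1, h2, by tauto⟩)

/-- Project a subgraph to the first side. -/
def proj (_h : Glued i j G₁ G₂ G x₁ y₁ x₂ y₂) (A : G.Subgraph) : G₁.Subgraph where
  verts := i ⁻¹' A.verts
  Adj u v := A.Adj (i u) (i v) ∨
    (s(u, v) = s(x₁, y₁) ∧ A.Adj (i x₁) (j x₂) ∧ A.Adj (i y₁) (j y₂))
  adj_sub := by
    rintro u v (h1 | ⟨h1, -, -⟩)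
    · exact ((_h.adjI _ _).1 (A.adj_sub h1)).1
    · rw [Sym2.eq_iff] at h1
      rcases h1 with ⟨rfl, rfl⟩ | ⟨rfl, rfl⟩
      · exact _h.e1
      · exact _h.e1.symm
  edge_vert := by
    rintro u v (h1 | ⟨h1, h2, h3⟩)
    · exact A.edge_vert h1
    · rw [Sym2.eq_iff] at h1
      rcases h1 with ⟨rfl, rfl⟩ | ⟨rfl, rfl⟩
      · exact A.edge_vert h2
      · exact A.edge_vert h3
  symm := by
    constructor
    rintro u v (h1 | ⟨h1, h2, h3⟩)
    · exact .inl h1.symm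
    · exact .inr ⟨by rwa [Sym2.eq_swap], h2, h3⟩

variable (h : Glued i j G₁ G₂ G x₁ y₁ x₂ y₂)

lemma glue_swap (A₁ : G₁.Subgraph) (A₂ : G₂.Subgraph) :
    h.swap.glue A₂ A₁ = h.glue A₁ A₂ := by
  ext a b
  · simp [glue, or_comm]
  · have e : ∀ p q r s t u v w : Prop, (p ∨ q ∨ r ∧ s ∧ (t ∨ u ∨ v ∨ w)) ↔
        (q ∨ p ∨ s ∧ r ∧ (u ∨ t ∨ w ∨ v)) := by tauto
    exact e _ _ _ _ _ _ _ _

lemma glue_vert (A₁ : G₁.Subgraph) (A₂ : G₂.Subgraph) (u : V₁) :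
    i u ∈ (h.glue A₁ A₂).verts ↔ u ∈ A₁.verts := by
  constructor
  · rintro (⟨w, hw, e⟩ | ⟨w, hw, e⟩)
    · rwa [← h.injI e]
    · exact (h.disj _ _ e.symm).elim
  · intro hu
    exact .inl ⟨_, hu, rfl⟩

lemma glue_adjI (A₁ : G₁.Subgraph) (A₂ : G₂.Subgraph) (u v : V₁) :
    (h.glue A₁ A₂).Adj (i u) (i v) ↔ A₁.Adj u v ∧ s(u, v) ≠ s(x₁, y₁) := by
  constructor
  · rintro (⟨u, v, e1, e2, h1, h2⟩ | ⟨u, v, e1, e2, h1, h2⟩ |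
      ⟨h1, h2, ⟨e1, e2⟩ | ⟨e1, e2⟩ | ⟨e1, e2⟩ | ⟨e1, e2⟩⟩)
    · rw [h.injI e1, h.injI e2]; exact ⟨h1, h2⟩
    all_goals first | exact (h.disj _ _ e1).elim | exact (h.disj _ _ e2).elim
  · intro hu
    exact .inl ⟨_, _, rfl, rfl, hu⟩

lemma glue_adjC (A₁ : G₁.Subgraph) (A₂ : G₂.Subgraph) (u : V₁) (v : V₂) :
    (h.glue A₁ A₂).Adj (i u) (j v) ↔ A₁.Adj x₁ y₁ ∧ A₂.Adj x₂ y₂ ∧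
      ((u = x₁ ∧ v = x₂) ∨ (u = y₁ ∧ v = y₂)) := by
  constructor
  · rintro (⟨u, v, e1, e2, h1, h2⟩ | ⟨u, v, e1, e2, h1, h2⟩ |
      ⟨h1, h2, ⟨e1, e2⟩ | ⟨e1, e2⟩ | ⟨e1, e2⟩ | ⟨e1, e2⟩⟩)
    · exact (h.disj _ _ e2.symm).elim
    · exact (h.disj _ _ e1).elim
    · exact ⟨h1, h2, .inl ⟨h.injI e1, h.injJ e2⟩⟩
    · exact (h.disj _ _ e1).elim
    · exact ⟨h1, h2, .inr ⟨h.injI e1, h.injJ e2⟩⟩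
    · exact (h.disj _ _ e1).elim
  · rintro ⟨h1, h2, ⟨rfl, rfl⟩ | ⟨rfl, rfl⟩⟩
    · exact .inr (.inr ⟨h1, h2, by simp⟩)
    · exact .inr (.inr ⟨h1, h2, by simp⟩)

lemma glue_vert' (A₁ : G₁.Subgraph) (A₂ : G₂.Subgraph) (u : V₂) :
    j u ∈ (h.glue A₁ A₂).verts ↔ u ∈ A₂.verts := by
  rw [← glue_swap, glue_vert]

lemma glue_adjJ (A₁ : G₁.Subgraph) (A₂ : G₂.Subgraph) (u v : V₂) :
    (h.glue A₁ A₂).Adj (j u) (j v) ↔ A₂.Adj u v ∧ s(u, v) ≠ s(x₂, y₂) := by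
  rw [← glue_swap, glue_adjI]

/-- Both cut edges are used by the subgraph, or none of them. -/
def Good (_h : Glued i j G₁ G₂ G x₁ y₁ x₂ y₂) (A : G.Subgraph) : Prop :=
  A.Adj (i x₁) (j x₂) ↔ A.Adj (i y₁) (j y₂)

lemma good_swap {A : G.Subgraph} (hA : h.Good A) : h.swap.Good A := by
  unfold Good at *
  rwa [A.adj_comm, A.adj_comm (j y₂)]

lemma good_glue (A₁ : G₁.Subgraph) (A₂ : G₂.Subgraph) : h.Good (h.glue A₁ A₂) := by
  unfold Good
  rw [glue_adjC, glue_adjC]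
  simp

lemma proj_glue {A₁ : G₁.Subgraph} {A₂ : G₂.Subgraph} (hm : A₁.Adj x₁ y₁ → A₂.Adj x₂ y₂) :
    h.proj (h.glue A₁ A₂) = A₁ := by
  ext u v
  · exact h.glue_vert _ _ _
  · simp only [proj]
    rw [h.glue_adjI, h.glue_adjC, h.glue_adjC]
    by_cases he : s(u, v) = s(x₁, y₁)
    · have : A₁.Adj u v ↔ A₁.Adj x₁ y₁ := by
        rw [← Subgraph.mem_edgeSet, he, Subgraph.mem_edgeSet]
      rw [this]
      simp [he]
      exact hm
    · simp [he]

lemma proj_edge {A : G.Subgraph} (hA : h.Good A) :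
    (h.proj A).Adj x₁ y₁ ↔ A.Adj (i x₁) (j x₂) := by
  simp only [proj]
  constructor
  · rintro (h1 | h1)
    · exact absurd rfl ((h.adjI _ _).1 (A.adj_sub h1)).2
    · exact h1.2.1
  · intro h1
    exact .inr ⟨trivial, h1, hA.1 h1⟩

lemma proj_adj {A : G.Subgraph} {u v : V₁} (he : s(u, v) ≠ s(x₁, y₁)) :
    (h.proj A).Adj u v ↔ A.Adj (i u) (i v) := by
  simp only [proj, he, false_and, or_false]

lemma adj_ne (h : Glued i j G₁ G₂ G x₁ y₁ x₂ y₂) {A : G.Subgraph} {u v : V₁} (ha : A.Adj (i u) (i v)) : s(u, v) ≠ s(x₁, y₁) :=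
  ((h.adjI _ _).1 (A.adj_sub ha)).2

lemma glue_proj {A : G.Subgraph} (hA : h.Good A) : h.glue (h.proj A) (h.swap.proj A) = A := by
  have hC : ∀ u v, (h.glue (h.proj A) (h.swap.proj A)).Adj (i u) (j v) ↔ A.Adj (i u) (j v) := by
    intro u v
    rw [h.glue_adjC, h.proj_edge hA, h.swap.proj_edge (h.good_swap hA), A.adj_comm (j x₂)]
    constructor
    · rintro ⟨h1, -, ⟨rfl, rfl⟩ | ⟨rfl, rfl⟩⟩
      · exact h1
      · exact hA.1 h1
    · intro h1
      rcases (h.adjC _ _).1 (A.adj_sub h1) with ⟨rfl, rfl⟩ | ⟨rfl, rfl⟩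
      · simp [h1]
      · simp [hA.2 h1]
  ext a b
  · rcases h.cov a with ⟨u, rfl⟩ | ⟨u, rfl⟩
    · rw [glue_vert]; rfl
    · rw [glue_vert']; rfl
  · rcases h.cov a with ⟨u, rfl⟩ | ⟨u, rfl⟩ <;> rcases h.cov b with ⟨v, rfl⟩ | ⟨v, rfl⟩
    · rw [glue_adjI]
      constructor
      · rintro ⟨h1, h2⟩
        exact (h.proj_adj h2).1 h1
      · intro h1
        exact ⟨(h.proj_adj (h.adj_ne h1)).2 h1, h.adj_ne h1⟩
    · exact hC _ _
    · rw [Subgraph.adj_comm, A.adj_comm]; exact hC _ _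
    · rw [glue_adjJ]
      constructor
      · rintro ⟨h1, h2⟩
        exact (h.swap.proj_adj h2).1 h1
      · intro h1
        exact ⟨(h.swap.proj_adj (h.swap.adj_ne h1)).2 h1, h.swap.adj_ne h1⟩

lemma xy_ne (h : Glued i j G₁ G₂ G x₁ y₁ x₂ y₂) : x₁ ≠ y₁ := h.e1.ne

/-- Degrees are preserved by the projection. -/
lemma proj_ncard {A : G.Subgraph} (hA : h.Good A) (u : V₁) :
    (A.neighborSet (i u)).ncard = ((h.proj A).neighborSet u).ncard := by
  classical
  let f : V₁ → V := fun v => if u = x₁ ∧ v = y₁ then j x₂ else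
    if u = y₁ ∧ v = x₁ then j y₂ else i v
  have hne := h.xy_ne
  have hf : Function.Injective f := by
    intro a b hab
    simp only [f] at hab
    split_ifs at hab with h1 h2 h3 h4 h5 h6 h7
    · rw [h1.2, h2.2]
    · exact absurd (h1.1.symm.trans h3.1) hne
    · exact (h.disj _ _ hab.symm).elim
    · exact absurd (h5.1.symm.trans h4.1) hne
    · rw [h4.2, h6.2]
    · exact (h.disj _ _ hab.symm).elim
    · exact (h.disj _ _ hab).elim
    · exact (h.disj _ _ hab).elim
    · exact h.injI hab
  have himg : A.neighborSet (i u) = f '' ((h.proj A).neighborSet u) := by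
    ext w
    simp only [Subgraph.mem_neighborSet, Set.mem_image]
    constructor
    · intro hw
      rcases h.cov w with ⟨v, rfl⟩ | ⟨v, rfl⟩
      · have hn := h.adj_ne hw
        refine ⟨v, (h.proj_adj hn).2 hw, ?_⟩
        rw [ne_eq, Sym2.eq_iff] at hn
        push Not at hn
        simp only [f]
        rw [if_neg (fun hh => hn.1 hh.1 hh.2), if_neg (fun hh => hn.2 hh.1 hh.2)]
      · rcases (h.adjC _ _).1 (A.adj_sub hw) with ⟨rfl, rfl⟩ | ⟨rfl, rfl⟩
        · exact ⟨y₁, (h.proj_edge hA).2 hw, by simp [f]⟩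
        · exact ⟨x₁, ((h.proj_edge hA).2 (hA.2 hw)).symm, by simp [f, hne.symm]⟩
    · rintro ⟨v, hv, rfl⟩
      simp only [f]
      split_ifs with h1 h2
      · obtain ⟨rfl, rfl⟩ := h1
        exact (h.proj_edge hA).1 hv
      · obtain ⟨rfl, rfl⟩ := h2
        exact hA.1 ((h.proj_edge hA).1 hv.symm)
      · refine (h.proj_adj ?_).1 hv
        rw [ne_eq, Sym2.eq_iff]
        tauto
  rw [himg, Set.ncard_image_of_injective _ hf]

lemma cubic_side (h : Glued i j G₁ G₂ G x₁ y₁ x₂ y₂) (c : IsCubic G₁) (u : V₁) : (G.neighborSet (i u)).ncard = 3 := by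
  have hx : G.Adj (i x₁) (j x₂) := (h.adjC _ _).2 (.inl ⟨rfl, rfl⟩)
  have hy : G.Adj (i y₁) (j y₂) := (h.adjC _ _).2 (.inr ⟨rfl, rfl⟩)
  have hg : h.Good ⊤ := by simp [Good, hx, hy]
  have := h.proj_ncard hg u
  have e1 : (⊤ : G.Subgraph).neighborSet (i u) = G.neighborSet (i u) := by ext; simp
  have e2 : (h.proj ⊤).neighborSet u = G₁.neighborSet u := by
    ext v
    simp only [Subgraph.mem_neighborSet, mem_neighborSet]
    refine ⟨fun hh => Subgraph.adj_sub _ hh, fun hh => ?_⟩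
    by_cases he : s(u, v) = s(x₁, y₁)
    · exact .inr ⟨he, by simpa using hx, by simpa using hy⟩
    · rw [h.proj_adj he]
      simpa using (h.adjI _ _).2 ⟨hh, he⟩
  rw [← e1, this, e2]
  exact c u

lemma cubic (h : Glued i j G₁ G₂ G x₁ y₁ x₂ y₂) (c1 : IsCubic G₁) (c2 : IsCubic G₂) : IsCubic G := by
  intro w
  rcases h.cov w with ⟨v, rfl⟩ | ⟨v, rfl⟩
  · exact h.cubic_side c1 v
  · exact h.swap.cubic_side c2 v

/-- Circuits use both cut edges or none. -/
lemma good_circuit [Finite V] {A : G.Subgraph} (hA : IsCircuit A) : h.Good A := by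
  have key : ∀ {x₁ y₁ : V₁} {x₂ y₂ : V₂} (_ : Glued i j G₁ G₂ G x₁ y₁ x₂ y₂),
      A.Adj (i x₁) (j x₂) → A.Adj (i y₁) (j y₂) := by
    intro x₁ y₁ x₂ y₂ h h1
    by_contra h2
    have hr := circuit_delete hA h1 (A.edge_vert h1) (A.edge_vert h1.symm)
    have : ∀ w, Relation.ReflTransGen (fun a b => A.Adj a b ∧ s(a, b) ≠ s(i x₁, j x₂)) (i x₁) w →
        ∃ u, w = i u := by
      intro w hw
      induction hw with
      | refl => exact ⟨_, rfl⟩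
      | @tail b c _ hbc ih =>
        obtain ⟨u, rfl⟩ := ih
        rcases h.cov c with ⟨v, rfl⟩ | ⟨v, rfl⟩
        · exact ⟨v, rfl⟩
        · rcases (h.adjC _ _).1 (A.adj_sub hbc.1) with ⟨rfl, rfl⟩ | ⟨rfl, rfl⟩
          · exact absurd rfl hbc.2
          · exact absurd hbc.1 h2
    obtain ⟨u, hu⟩ := this _ hr
    exact h.disj _ _ hu.symm
  exact ⟨key h, key h.flip⟩

lemma reach_proj {A : G.Subgraph} (hA : h.Good A) {u : V₁} {w : V}
    (hr : Relation.ReflTransGen A.Adj (i u) w) :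
    (∃ v, w = i v ∧ Relation.ReflTransGen (h.proj A).Adj u v) ∨
    (∃ v, w = j v ∧ Relation.ReflTransGen (h.proj A).Adj u x₁ ∧ A.Adj (i x₁) (j x₂)) := by
  induction hr with
  | refl => exact .inl ⟨u, rfl, .refl⟩
  | @tail b c _ hbc ih =>
    rcases ih with ⟨v, rfl, ih⟩ | ⟨v, rfl, ih, hc⟩
    · rcases h.cov c with ⟨w, rfl⟩ | ⟨w, rfl⟩
      · exact .inl ⟨w, rfl, ih.tail (.inl hbc)⟩
      · rcases (h.adjC _ _).1 (A.adj_sub hbc) with ⟨rfl, rfl⟩ | ⟨rfl, rfl⟩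
        · exact .inr ⟨_, rfl, ih, hbc⟩
        · have := hA.2 hbc
          exact .inr ⟨_, rfl, ih.tail ((h.proj_edge hA).2 this).symm, this⟩
    · rcases h.cov c with ⟨w, rfl⟩ | ⟨w, rfl⟩
      · rcases (h.adjC _ _).1 (A.adj_sub hbc.symm) with ⟨rfl, rfl⟩ | ⟨rfl, rfl⟩
        · exact .inl ⟨_, rfl, ih⟩
        · exact .inl ⟨_, rfl, ih.tail ((h.proj_edge hA).2 hc)⟩
      · exact .inr ⟨_, rfl, ih, hc⟩

lemma circuit_proj [Finite V] {A : G.Subgraph} (hA : IsCircuit A)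
    (hn : (h.proj A).verts.Nonempty) : IsCircuit (h.proj A) := by
  have hg := h.good_circuit hA
  have hc := (conn_iff A).1 hA.1
  refine ⟨(conn_iff _).2 ⟨hn, fun u hu v hv => ?_⟩, fun u hu => ?_⟩
  · rcases h.reach_proj hg (hc.2 _ hu _ hv) with ⟨w, hw, hr⟩ | ⟨w, hw, -⟩
    · rwa [h.injI hw]
    · exact (h.disj _ _ hw).elim
  · rw [← h.proj_ncard hg]
    exact hA.2 _ hu

/-- A circuit off the cut lies in one side. -/
lemma off_cut [Finite V] {A : G.Subgraph} (hA : IsCircuit A) (hx : ¬ A.Adj (i x₁) (j x₂))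
    (hn : (h.proj A).verts.Nonempty) : h.swap.proj A = ⊥ := by
  have hg := h.good_circuit hA
  have hc := (conn_iff A).1 hA.1
  obtain ⟨u, hu⟩ := hn
  have hv : ∀ v, j v ∉ A.verts := by
    intro v hv
    rcases h.reach_proj hg (hc.2 _ hu _ hv) with ⟨w, hw, hr⟩ | ⟨w, hw, -, h3⟩
    · exact h.disj _ _ hw.symm
    · exact hx h3
  ext a b
  · simpa [proj] using hv a
  · simp only [Subgraph.not_bot_adj, iff_false]
    intro hab
    exact hv a ((h.swap.proj A).edge_vert hab)

lemma nonempty_or {A : G.Subgraph} (hA : IsCircuit A) :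
    (h.proj A).verts.Nonempty ∨ (h.swap.proj A).verts.Nonempty := by
  obtain ⟨w, hw⟩ := ((conn_iff A).1 hA.1).1
  rcases h.cov w with ⟨v, rfl⟩ | ⟨v, rfl⟩
  · exact .inl ⟨v, hw⟩
  · exact .inr ⟨v, hw⟩

lemma reach_glue {A₁ : G₁.Subgraph} {A₂ : G₂.Subgraph} {u v : V₁}
    (hr : Relation.ReflTransGen (fun a b => A₁.Adj a b ∧ s(a, b) ≠ s(x₁, y₁)) u v) :
    Relation.ReflTransGen (h.glue A₁ A₂).Adj (i u) (i v) :=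
  Relation.ReflTransGen.lift i (fun _ _ hab => (h.glue_adjI _ _ _ _).2 hab) _ _ hr

lemma glue_ncard (A₁ : G₁.Subgraph) (A₂ : G₂.Subgraph) (hm : A₁.Adj x₁ y₁ ↔ A₂.Adj x₂ y₂)
    (c1 : ∀ v ∈ A₁.verts, (A₁.neighborSet v).ncard = 2)
    (c2 : ∀ v ∈ A₂.verts, (A₂.neighborSet v).ncard = 2) :
    ∀ v ∈ (h.glue A₁ A₂).verts, ((h.glue A₁ A₂).neighborSet v).ncard = 2 := by
  intro w hw
  rcases h.cov w with ⟨v, rfl⟩ | ⟨v, rfl⟩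
  · rw [h.proj_ncard (h.good_glue _ _), h.proj_glue hm.1]
    exact c1 _ ((h.glue_vert _ _ _).1 hw)
  · rw [← h.glue_swap, h.swap.proj_ncard (h.swap.good_glue _ _), h.swap.proj_glue hm.2]
    exact c2 _ ((h.glue_vert' _ _ _).1 hw)

lemma circuit_glue [Finite V₁] [Finite V₂] {A₁ : G₁.Subgraph} {A₂ : G₂.Subgraph}
    (c1 : IsCircuit A₁) (c2 : IsCircuit A₂) (e1 : A₁.Adj x₁ y₁) (e2 : A₂.Adj x₂ y₂) :
    IsCircuit (h.glue A₁ A₂) := by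
  have r1 : ∀ u ∈ A₁.verts, ∀ v ∈ A₁.verts,
      Relation.ReflTransGen (h.glue A₁ A₂).Adj (i u) (i v) := fun u hu v hv =>
    h.reach_glue (circuit_delete c1 e1 hu hv)
  have r2 : ∀ u ∈ A₂.verts, ∀ v ∈ A₂.verts,
      Relation.ReflTransGen (h.glue A₁ A₂).Adj (j u) (j v) := fun u hu v hv => by
    rw [← h.glue_swap]
    exact h.swap.reach_glue (circuit_delete c2 e2 hu hv)
  have r3 : (h.glue A₁ A₂).Adj (i x₁) (j x₂) := by simp [h.glue_adjC, e1, e2]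
  refine ⟨(conn_iff _).2 ⟨⟨i x₁, (h.glue_vert _ _ _).2 (A₁.edge_vert e1)⟩, ?_⟩,
    h.glue_ncard _ _ (by simp [e1, e2]) c1.2 c2.2⟩
  intro a ha b hb
  rcases h.cov a with ⟨u, rfl⟩ | ⟨u, rfl⟩ <;> rcases h.cov b with ⟨v, rfl⟩ | ⟨v, rfl⟩
  all_goals simp only [h.glue_vert, h.glue_vert'] at ha hb
  · exact r1 _ ha _ hb
  · exact ((r1 _ ha _ (A₁.edge_vert e1)).tail r3).trans (r2 _ (A₂.edge_vert e2) _ hb)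
  · exact ((r2 _ ha _ (A₂.edge_vert e2)).tail r3.symm).trans (r1 _ (A₁.edge_vert e1) _ hb)
  · exact r2 _ ha _ hb

lemma circuit_lift {A₁ : G₁.Subgraph} (c1 : IsCircuit A₁) (e1 : ¬ A₁.Adj x₁ y₁) :
    IsCircuit (h.glue A₁ ⊥) := by
  obtain ⟨⟨w, hw⟩, hc⟩ := (conn_iff _).1 c1.1
  refine ⟨(conn_iff _).2 ⟨⟨i w, (h.glue_vert _ _ _).2 hw⟩, ?_⟩,
    h.glue_ncard _ _ (by simp [e1]) c1.2 (by simp)⟩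
  intro a ha b hb
  rcases h.cov a with ⟨u, rfl⟩ | ⟨u, rfl⟩ <;> rcases h.cov b with ⟨v, rfl⟩ | ⟨v, rfl⟩
  all_goals simp only [h.glue_vert, h.glue_vert'] at ha hb
  · refine h.reach_glue (Relation.ReflTransGen.mono ?_ _ _ (hc _ ha _ hb))
    intro a b hab
    refine ⟨hab, fun he => e1 ?_⟩
    rw [← Subgraph.mem_edgeSet, ← he]
    exact hab
  · exact absurd hb (by simp)
  · exact absurd ha (by simp)
  · exact absurd hb (by simp)

/-- The circuits of the glued cover avoiding the cut. -/
noncomputable def rest (h : Glued i j G₁ G₂ G x₁ y₁ x₂ y₂) (R₁ : Multiset G₁.Subgraph)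
    (R₂ : Multiset G₂.Subgraph) : Multiset G.Subgraph :=
  R₁.map (fun H => h.glue H ⊥) + R₂.map (fun H => h.glue ⊥ H)

lemma rest_swap (R₁ : Multiset G₁.Subgraph) (R₂ : Multiset G₂.Subgraph) :
    h.swap.rest R₂ R₁ = h.rest R₁ R₂ := by
  simp only [rest, h.glue_swap]
  rw [add_comm]

open scoped Classical in
lemma count_side (A₁ B₁ : G₁.Subgraph) (A₂ B₂ : G₂.Subgraph) (R₁ : Multiset G₁.Subgraph)
    (R₂ : Multiset G₂.Subgraph) {u v : V₁} (he : s(u, v) ≠ s(x₁, y₁)) :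
    (h.glue A₁ A₂ ::ₘ h.glue B₁ B₂ ::ₘ h.rest R₁ R₂).countP (fun H => H.Adj (i u) (i v)) =
      (A₁ ::ₘ B₁ ::ₘ R₁).countP (fun H => H.Adj u v) := by
  have z : (R₂.map (fun H => h.glue ⊥ H)).countP (fun H => H.Adj (i u) (i v)) = 0 := by
    rw [Multiset.countP_eq_zero]
    intro H hH
    obtain ⟨K, -, rfl⟩ := Multiset.mem_map.1 hH
    simp [h.glue_adjI]
  have y : (R₁.map (fun H => h.glue H ⊥)).countP (fun H => H.Adj (i u) (i v)) =
      R₁.countP (fun H => H.Adj u v) := by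
    rw [Multiset.countP_map, Multiset.countP_eq_card_filter]
    congr 1
    apply Multiset.filter_congr
    intro H _
    rw [h.glue_adjI]
    exact and_iff_left he
  rw [Multiset.countP_cons, Multiset.countP_cons, Multiset.countP_cons, Multiset.countP_cons,
    rest, Multiset.countP_add, z, y, add_zero]
  simp only [h.glue_adjI, he, ne_eq, not_false_eq_true, and_true]

lemma rest_off (R₁ : Multiset G₁.Subgraph) (R₂ : Multiset G₂.Subgraph) (u : V₁) (v : V₂) :
    ∀ H ∈ h.rest R₁ R₂, ¬ H.Adj (i u) (j v) := by
  intro H hH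
  rcases Multiset.mem_add.1 hH with hH | hH <;> obtain ⟨K, -, rfl⟩ := Multiset.mem_map.1 hH <;>
    simp [h.glue_adjC]

/-- Gluing of double covers. -/
lemma cidc_glue [Finite V₁] [Finite V₂] {A₁ B₁ : G₁.Subgraph} {A₂ B₂ : G₂.Subgraph}
    {R₁ : Multiset G₁.Subgraph} {R₂ : Multiset G₂.Subgraph}
    (hA₁ : A₁.Adj x₁ y₁) (hB₁ : B₁.Adj x₁ y₁) (hA₂ : A₂.Adj x₂ y₂) (hB₂ : B₂.Adj x₂ y₂)
    (c₁ : IsCiDC G₁ (A₁ ::ₘ B₁ ::ₘ R₁)) (c₂ : IsCiDC G₂ (A₂ ::ₘ B₂ ::ₘ R₂)) :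
    IsCiDC G (h.glue A₁ A₂ ::ₘ h.glue B₁ B₂ ::ₘ h.rest R₁ R₂) := by
  classical
  have o₁ := rest_not c₁ hA₁ hB₁
  have o₂ := rest_not c₂ hA₂ hB₂
  rw [isCiDC_iff] at c₁ c₂ ⊢
  constructor
  · intro H hH
    simp only [Multiset.mem_cons, rest, Multiset.mem_add, Multiset.mem_map] at hH
    rcases hH with rfl | rfl | ⟨K, hK, rfl⟩ | ⟨K, hK, rfl⟩
    · exact h.circuit_glue (c₁.1 _ (by simp)) (c₂.1 _ (by simp)) hA₁ hA₂
    · exact h.circuit_glue (c₁.1 _ (by simp)) (c₂.1 _ (by simp)) hB₁ hB₂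
    · exact h.circuit_lift (c₁.1 _ (by simp [hK])) (o₁ _ hK)
    · rw [← h.glue_swap]
      exact h.swap.circuit_lift (c₂.1 _ (by simp [hK])) (o₂ _ hK)
  · have hC : ∀ u v, G.Adj (i u) (j v) → (h.glue A₁ A₂ ::ₘ h.glue B₁ B₂ ::ₘ h.rest R₁ R₂).countP
        (fun H => H.Adj (i u) (j v)) = 2 := by
      intro u v huv
      have := (h.adjC _ _).1 huv
      exact count_edge ((h.glue_adjC _ _ _ _).2 ⟨hA₁, hA₂, this⟩)
        ((h.glue_adjC _ _ _ _).2 ⟨hB₁, hB₂, this⟩) (h.rest_off _ _ _ _)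
    intro a b hab
    rcases h.cov a with ⟨u, rfl⟩ | ⟨u, rfl⟩ <;> rcases h.cov b with ⟨v, rfl⟩ | ⟨v, rfl⟩
    · have := (h.adjI _ _).1 hab
      rw [h.count_side _ _ _ _ _ _ this.2]
      exact c₁.2 _ _ this.1
    · exact hC _ _ hab
    · rw [← hC _ _ hab.symm]
      simp only [Subgraph.adj_comm]
    · have := (h.adjJ _ _).1 hab
      rw [← h.glue_swap, ← h.glue_swap B₁, ← h.rest_swap, h.swap.count_side _ _ _ _ _ _ this.2]
      exact c₂.2 _ _ this.1

/-- One side of a glued double cover is a double cover. -/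
lemma cidc_side {A₁ B₁ : G₁.Subgraph} {A₂ B₂ : G₂.Subgraph}
    {R₁ : Multiset G₁.Subgraph} {R₂ : Multiset G₂.Subgraph}
    (hA₁ : A₁.Adj x₁ y₁) (hB₁ : B₁.Adj x₁ y₁) (hR : ∀ H ∈ R₁, ¬ H.Adj x₁ y₁)
    (hc : ∀ H ∈ A₁ ::ₘ B₁ ::ₘ R₁, IsCircuit H)
    (c : IsCiDC G (h.glue A₁ A₂ ::ₘ h.glue B₁ B₂ ::ₘ h.rest R₁ R₂)) :
    IsCiDC G₁ (A₁ ::ₘ B₁ ::ₘ R₁) := by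
  classical
  rw [isCiDC_iff] at c ⊢
  refine ⟨hc, fun u v huv => ?_⟩
  by_cases he : s(u, v) = s(x₁, y₁)
  · have e : ∀ H : G₁.Subgraph, H.Adj u v ↔ H.Adj x₁ y₁ := by
      intro H
      rw [← Subgraph.mem_edgeSet, he, Subgraph.mem_edgeSet]
    simp only [e]
    exact count_edge hA₁ hB₁ hR
  · rw [← h.count_side A₁ B₁ A₂ B₂ R₁ R₂ he]
    exact c.2 _ _ ((h.adjI _ _).2 ⟨huv, he⟩)

open scoped Classical in
/-- The circuits of the first side recovered from the glued cover. -/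
noncomputable def side (h : Glued i j G₁ G₂ G x₁ y₁ x₂ y₂) (R : Multiset G.Subgraph) :
    Multiset G₁.Subgraph :=
  (R.filter (fun H => (h.proj H).verts.Nonempty)).map h.proj

lemma side_rest {R₁ : Multiset G₁.Subgraph} (R₂ : Multiset G₂.Subgraph)
    (c : ∀ H ∈ R₁, IsCircuit H) (hR : ∀ H ∈ R₁, ¬ H.Adj x₁ y₁) :
    h.side (h.rest R₁ R₂) = R₁ := by
  classical
  have p1 : ∀ H ∈ R₁, h.proj (h.glue H ⊥) = H := fun H hH =>
    h.proj_glue (fun hh => absurd hh (hR H hH))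
  have p2 : ∀ H, h.proj (h.glue ⊥ H) = ⊥ := fun H => h.proj_glue (by simp)
  have f1 : (R₁.map (fun H => h.glue H ⊥)).filter (fun H => (h.proj H).verts.Nonempty) =
      R₁.map (fun H => h.glue H ⊥) := by
    rw [Multiset.filter_eq_self]
    intro H hH
    obtain ⟨K, hK, rfl⟩ := Multiset.mem_map.1 hH
    rw [p1 K hK]
    exact (c K hK).1.nonempty
  have f2 : (R₂.map (fun H => h.glue ⊥ H)).filter (fun H => (h.proj H).verts.Nonempty) = 0 := by
    rw [Multiset.filter_eq_nil]
    intro H hH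
    obtain ⟨K, hK, rfl⟩ := Multiset.mem_map.1 hH
    rw [p2 K]
    simp
  rw [side, rest, Multiset.filter_add, f1, f2, add_zero, Multiset.map_map]
  conv_rhs => rw [← Multiset.map_id R₁]
  exact Multiset.map_congr rfl p1

lemma rest_side [Finite V] {R : Multiset G.Subgraph} (c : ∀ H ∈ R, IsCircuit H)
    (hR : ∀ H ∈ R, ¬ H.Adj (i x₁) (j x₂)) : h.rest (h.side R) (h.swap.side R) = R := by
  classical
  have m1 : (h.side R).map (fun H => h.glue H ⊥) =
      R.filter (fun H => (h.proj H).verts.Nonempty) := by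
    rw [side, Multiset.map_map]
    conv_rhs => rw [← Multiset.map_id (R.filter _)]
    apply Multiset.map_congr rfl
    intro H hH
    obtain ⟨hH, hn⟩ := Multiset.mem_filter.1 hH
    have := h.glue_proj (h.good_circuit (c H hH))
    rw [h.off_cut (c H hH) (hR H hH) hn] at this
    exact this
  have m2 : (h.swap.side R).map (fun H => h.glue ⊥ H) =
      R.filter (fun H => ¬ (h.proj H).verts.Nonempty) := by
    have e : R.filter (fun H => ¬ (h.proj H).verts.Nonempty) =
        R.filter (fun H => (h.swap.proj H).verts.Nonempty) := by
      apply Multiset.filter_congr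
      intro H hH
      constructor
      · intro hn
        exact (h.nonempty_or (c H hH)).resolve_left hn
      · intro hn hn'
        rw [h.off_cut (c H hH) (hR H hH) hn'] at hn
        simp at hn
    rw [e, side, Multiset.map_map]
    conv_rhs => rw [← Multiset.map_id (R.filter _)]
    apply Multiset.map_congr rfl
    intro H hH
    obtain ⟨hH, hn⟩ := Multiset.mem_filter.1 hH
    have := h.glue_proj (h.good_circuit (c H hH))
    rw [h.swap.off_cut (c H hH) (fun hh => hR H hH hh.symm) hn] at this
    exact this
  rw [rest, m1, m2, Multiset.filter_add_not]

lemma side_mem [Finite V] {R : Multiset G.Subgraph} (c : ∀ H ∈ R, IsCircuit H)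
    (hR : ∀ H ∈ R, ¬ H.Adj (i x₁) (j x₂)) :
    ∀ H ∈ h.side R, IsCircuit H ∧ ¬ H.Adj x₁ y₁ := by
  classical
  intro H hH
  obtain ⟨K, hK, rfl⟩ := Multiset.mem_map.1 hH
  obtain ⟨hK, hn⟩ := Multiset.mem_filter.1 hK
  refine ⟨h.circuit_proj (c K hK) hn, ?_⟩
  rw [h.proj_edge (h.good_circuit (c K hK))]
  exact hR K hK

lemma through_proj [Finite V] {A : G.Subgraph} (hA : IsCircuit A) (hx : A.Adj (i x₁) (j x₂)) :
    IsCircuit (h.proj A) ∧ (h.proj A).Adj x₁ y₁ := by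
  have := (h.proj_edge (h.good_circuit hA)).2 hx
  exact ⟨h.circuit_proj hA ⟨_, (h.proj A).edge_vert this⟩, this⟩

lemma card_glue (h : Glued i j G₁ G₂ G x₁ y₁ x₂ y₂)
    [Finite V₁] [Finite V₂] [Finite V] :
    Nat.card (Trip G (i x₁) (j x₂)) = Nat.card (Trip G₁ x₁ y₁) * Nat.card (Trip G₂ x₂ y₂) := by
  classical
  let F : Trip G₁ x₁ y₁ × Trip G₂ x₂ y₂ → Trip G (i x₁) (j x₂) := fun q =>
    ⟨(h.glue q.1.1.1 q.2.1.1, h.glue q.1.1.2.1 q.2.1.2.1, h.rest q.1.1.2.2 q.2.1.2.2),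
      h.cidc_glue q.1.2.2.1 q.1.2.2.2 q.2.2.2.1 q.2.2.2.2 q.1.2.1 q.2.2.1,
      (h.glue_adjC _ _ _ _).2 ⟨q.1.2.2.1, q.2.2.2.1, .inl ⟨rfl, rfl⟩⟩,
      (h.glue_adjC _ _ _ _).2 ⟨q.1.2.2.2, q.2.2.2.2, .inl ⟨rfl, rfl⟩⟩⟩
  rw [← Nat.card_prod]
  symm
  apply Nat.card_eq_of_bijective F
  constructor
  · rintro ⟨⟨⟨A₁, B₁, R₁⟩, c₁, a₁, b₁⟩, ⟨⟨A₂, B₂, R₂⟩, c₂, a₂, b₂⟩⟩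
      ⟨⟨⟨A₁', B₁', R₁'⟩, c₁', a₁', b₁'⟩, ⟨⟨A₂', B₂', R₂'⟩, c₂', a₂', b₂'⟩⟩ he
    simp only [F, Subtype.mk.injEq, Prod.mk.injEq] at he
    dsimp only at c₁ a₁ b₁ c₂ a₂ b₂ c₁' a₁' b₁' c₂' a₂' b₂'
    obtain ⟨eA, eB, eR⟩ := he
    have eA1 := congrArg h.proj eA
    have eB1 := congrArg h.proj eB
    rw [h.proj_glue (fun _ => a₂), h.proj_glue (fun _ => a₂')] at eA1
    rw [h.proj_glue (fun _ => b₂), h.proj_glue (fun _ => b₂')] at eB1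
    have eR1 := congrArg h.side eR
    rw [h.side_rest _ (fun H hH => c₁.1 H (by simp [hH])) (rest_not c₁ a₁ b₁),
      h.side_rest _ (fun H hH => c₁'.1 H (by simp [hH])) (rest_not c₁' a₁' b₁')] at eR1
    rw [← h.glue_swap, ← h.glue_swap A₁'] at eA
    rw [← h.glue_swap, ← h.glue_swap B₁'] at eB
    rw [← h.rest_swap, ← h.rest_swap R₁'] at eR
    have eA2 := congrArg h.swap.proj eA
    have eB2 := congrArg h.swap.proj eB
    rw [h.swap.proj_glue (fun _ => a₁), h.swap.proj_glue (fun _ => a₁')] at eA2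
    rw [h.swap.proj_glue (fun _ => b₁), h.swap.proj_glue (fun _ => b₁')] at eB2
    have eR2 := congrArg h.swap.side eR
    rw [h.swap.side_rest _ (fun H hH => c₂.1 H (by simp [hH])) (rest_not c₂ a₂ b₂),
      h.swap.side_rest _ (fun H hH => c₂'.1 H (by simp [hH])) (rest_not c₂' a₂' b₂')] at eR2
    subst eA1 eB1 eR1 eA2 eB2 eR2
    rfl
  · rintro ⟨⟨A, B, R⟩, c, a, b⟩
    dsimp only at c a b
    have hR := rest_not c a b
    have hR' : ∀ H ∈ R, ¬ H.Adj (j x₂) (i x₁) := fun H hH hh => hR H hH hh.symm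
    have cA := c.1 A (by simp)
    have cB := c.1 B (by simp)
    have cR : ∀ H ∈ R, IsCircuit H := fun H hH => c.1 H (by simp [hH])
    have A1 := h.through_proj cA a
    have B1 := h.through_proj cB b
    have A2 := h.swap.through_proj cA a.symm
    have B2 := h.swap.through_proj cB b.symm
    have R1 := h.side_mem cR hR
    have R2 := h.swap.side_mem cR hR'
    have gA := h.glue_proj (h.good_circuit cA)
    have gB := h.glue_proj (h.good_circuit cB)
    have gR := h.rest_side cR hR
    have c1 : IsCiDC G₁ (h.proj A ::ₘ h.proj B ::ₘ h.side R) := by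
      refine h.cidc_side (A₂ := h.swap.proj A) (B₂ := h.swap.proj B) (R₂ := h.swap.side R)
        A1.2 B1.2 (fun H hH => (R1 H hH).2) ?_ (by rw [gA, gB, gR]; exact c)
      intro H hH
      simp only [Multiset.mem_cons] at hH
      rcases hH with rfl | rfl | hH
      · exact A1.1
      · exact B1.1
      · exact (R1 H hH).1
    have c2 : IsCiDC G₂ (h.swap.proj A ::ₘ h.swap.proj B ::ₘ h.swap.side R) := by
      refine h.swap.cidc_side (A₂ := h.proj A) (B₂ := h.proj B) (R₂ := h.side R)
        A2.2 B2.2 (fun H hH => (R2 H hH).2) ?_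
        (by rw [h.glue_swap, h.glue_swap, h.rest_swap, gA, gB, gR]; exact c)
      intro H hH
      simp only [Multiset.mem_cons] at hH
      rcases hH with rfl | rfl | hH
      · exact A2.1
      · exact B2.1
      · exact (R2 H hH).1
    refine ⟨(⟨(h.proj A, h.proj B, h.side R), c1, A1.2, B1.2⟩,
      ⟨(h.swap.proj A, h.swap.proj B, h.swap.side R), c2, A2.2, B2.2⟩), ?_⟩
    apply Subtype.ext
    exact Prod.ext gA (Prod.ext gB gR)

end Glued

/-- Gluing two cubic graphs across a 2-edge-cut: `G` is obtained from the disjoint union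
of `G₁ − x₁y₁` and `G₂ − x₂y₂` by adding the edges `x₁x₂` and `y₁y₂`.
Then `ν(G) = 2 · ν(G₁) · ν(G₂)`. -/
theorem stmt7 {V₁ V₂ : Type*} [Fintype V₁] [Fintype V₂]
    (G₁ : SimpleGraph V₁) (G₂ : SimpleGraph V₂)
    (h₁ : IsCubic G₁) (h₂ : IsCubic G₂)
    (x₁ y₁ : V₁) (x₂ y₂ : V₂) (he₁ : G₁.Adj x₁ y₁) (he₂ : G₂.Adj x₂ y₂)
    (G : SimpleGraph (V₁ ⊕ V₂))
    (hG : ∀ a b : V₁ ⊕ V₂, G.Adj a b ↔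
      (∃ u v : V₁, a = Sum.inl u ∧ b = Sum.inl v ∧ G₁.Adj u v ∧ s(u, v) ≠ s(x₁, y₁)) ∨
      (∃ u v : V₂, a = Sum.inr u ∧ b = Sum.inr v ∧ G₂.Adj u v ∧ s(u, v) ≠ s(x₂, y₂)) ∨
      (a = Sum.inl x₁ ∧ b = Sum.inr x₂) ∨ (a = Sum.inr x₂ ∧ b = Sum.inl x₁) ∨
      (a = Sum.inl y₁ ∧ b = Sum.inr y₂) ∨ (a = Sum.inr y₂ ∧ b = Sum.inl y₁)) :
    nu G = 2 * nu G₁ * nu G₂ := by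
  have h : Glued (Sum.inl : V₁ → V₁ ⊕ V₂) (Sum.inr : V₂ → V₁ ⊕ V₂) G₁ G₂ G x₁ y₁ x₂ y₂ :=
    { injI := Sum.inl_injective
      injJ := Sum.inr_injective
      disj := by simp
      cov := by rintro (u | u) <;> simp
      adjI := by
        intro u v
        rw [hG]
        constructor
        · rintro (⟨u', v', e1, e2, h'⟩ | ⟨u', v', e1, e2, h'⟩ | h')
          · rw [Sum.inl_injective e1, Sum.inl_injective e2]
            exact h'
          · cases e1
          · simp at h'
        · intro h'
          exact .inl ⟨u, v, rfl, rfl, h'⟩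
      adjJ := by
        intro u v
        rw [hG]
        constructor
        · rintro (⟨u', v', e1, e2, h'⟩ | ⟨u', v', e1, e2, h'⟩ | h')
          · cases e1
          · rw [Sum.inr_injective e1, Sum.inr_injective e2]
            exact h'
          · simp at h'
        · intro h'
          exact .inr (.inl ⟨u, v, rfl, rfl, h'⟩)
      adjC := by
        intro u v
        rw [hG]
        simp
      e1 := he₁
      e2 := he₂ }
  have hc := h.cubic h₁ h₂
  have k := h.card_glue
  rw [card_trip hc ((h.adjC _ _).2 (.inl ⟨rfl, rfl⟩)), card_trip h₁ he₁, card_trip h₂ he₂] at k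
  have : 2 * nu G = 2 * (2 * nu G₁ * nu G₂) := by rw [k]; ring
  omega

end CiDC
end

section
/- Let G1 and G2 be cubic simple graphs on disjoint vertex sets, let v1 be a vertex of G1 with neighbors a1, b1, c1 and v2 a vertex of G2 with neighbors a2, b2, c2, and let G be the graph obtained from the disjoint union of G1 − v1 and G2 − v2 by adding the three new edges a1a2, b1b2 and c1c2 (so that {a1a2, b1b2, c1c2} is a 3-edge-cut of G). Then ν(G) = ν(G1) · ν(G2). -/
namespace CiDC

open SimpleGraph

section Helpers

open scoped Classical

variable {V W V' : Type*}

lemma connected_closed {G : SimpleGraph V} {H : G.Subgraph} (h : H.Connected) (S : Set V)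
    (hS : ∀ p q, H.Adj p q → p ∈ S → q ∈ S) {x : V} (hx : x ∈ H.verts) (hxS : x ∈ S) :
    H.verts ⊆ S := by
  intro y hy
  have hr : H.coe.Reachable ⟨x, hx⟩ ⟨y, hy⟩ := h.preconnected.coe _ _
  rw [SimpleGraph.reachable_iff_reflTransGen] at hr
  have key : ∀ z : H.verts, Relation.ReflTransGen H.coe.Adj ⟨x, hx⟩ z → z.1 ∈ S := by
    intro z hz
    induction hz with
    | refl => exact hxS
    | tail _ h2 ih => exact hS _ _ h2 ih
  exact key _ hr

lemma connected_of_closed {G : SimpleGraph V} {H : G.Subgraph} (hne : H.verts.Nonempty)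
    (h : ∀ S : Set V, (∀ p q, H.Adj p q → p ∈ S → q ∈ S) →
      (∃ x ∈ H.verts, x ∈ S) → H.verts ⊆ S) : H.Connected := by
  rw [SimpleGraph.Subgraph.connected_iff]
  refine ⟨?_, hne⟩
  constructor
  rintro ⟨x, hx⟩ ⟨y, hy⟩
  have := h {z | ∃ hz : z ∈ H.verts, H.coe.Reachable ⟨x, hx⟩ ⟨z, hz⟩} ?_ ⟨x, hx, hx, SimpleGraph.Reachable.refl _⟩ hy
  · obtain ⟨_, h⟩ := this
    exact h
  · rintro p q hpq ⟨hp, hr⟩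
    refine ⟨H.edge_vert hpq.symm, hr.trans (SimpleGraph.Adj.reachable ?_)⟩
    exact hpq

lemma circuit_mem_iff {G : SimpleGraph V} {H : G.Subgraph} (h : IsCircuit H) (p : V) :
    p ∈ H.verts ↔ ∃ q, H.Adj p q := by
  constructor
  · intro hp
    have h2 := h.2 p hp
    have : (H.neighborSet p).Nonempty := by
      apply Set.nonempty_of_ncard_ne_zero; omega
    exact this
  · rintro ⟨q, hq⟩
    exact H.edge_vert hq

lemma circuit_ext {G : SimpleGraph V} {H H' : G.Subgraph} (h : IsCircuit H) (h' : IsCircuit H')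
    (ha : ∀ p q, H.Adj p q ↔ H'.Adj p q) : H = H' := by
  apply SimpleGraph.Subgraph.ext
  · ext p
    rw [circuit_mem_iff h, circuit_mem_iff h']
    simp only [ha]
  · ext p q
    exact ha p q

/-- Contraction data for one side of the cut. -/
structure Side (G : SimpleGraph W) (K : SimpleGraph V) (v : V) (φ : W → V)
    (a b : Fin 3 → W) : Prop where
  inj : ∀ {p q}, φ p = φ q → φ p ≠ v → p = q
  adj : ∀ {p q}, G.Adj p q → φ p ≠ φ q → K.Adj (φ p) (φ q)
  lift : ∀ {x y}, K.Adj x y → ∃ p q, G.Adj p q ∧ φ p = x ∧ φ q = y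
  surj : ∀ {x}, x ≠ v → ∃ p, φ p = x
  ha : ∀ i, φ (a i) ≠ v
  hb : ∀ i, φ (b i) = v
  hab : ∀ i, G.Adj (a i) (b i)
  cut : ∀ {p q}, G.Adj p q → φ p ≠ v → φ q = v → ∃ i, p = a i ∧ q = b i
  ainj : Function.Injective a

variable {G : SimpleGraph W} {K : SimpleGraph V} {v : V} {φ : W → V} {a b : Fin 3 → W}

lemma Side.uniq (s : Side G K v φ a b) {p q p' q' : W} (h : G.Adj p q) (h' : G.Adj p' q')
    (hp : φ p = φ p') (hq : φ q = φ q') (hne : φ p ≠ φ q) : p = p' ∧ q = q' := by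
  by_cases h1 : φ p = v
  · have h2 : φ q ≠ v := fun h2 => hne (h1.trans h2.symm)
    obtain ⟨i, hi, hi'⟩ := s.cut h.symm h2 h1
    obtain ⟨j, hj, hj'⟩ := s.cut h'.symm (hq ▸ h2) (hp ▸ h1)
    have hqq := s.inj hq h2
    have : i = j := s.ainj (by rw [← hi, ← hj, hqq])
    subst this
    exact ⟨hi'.trans hj'.symm, hqq⟩
  · have hpp := s.inj hp h1
    by_cases h2 : φ q = v
    · obtain ⟨i, hi, hi'⟩ := s.cut h h1 h2
      obtain ⟨j, hj, hj'⟩ := s.cut h' (hp ▸ h1) (hq ▸ h2)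
      have : i = j := s.ainj (by rw [← hi, ← hj, hpp])
      subst this
      exact ⟨hpp, hi'.trans hj'.symm⟩
    · exact ⟨hpp, s.inj hq h2⟩

/-- Image of a subgraph under the contraction. -/
def proj (s : Side G K v φ a b) (H : G.Subgraph) : K.Subgraph where
  verts := φ '' H.verts
  Adj x y := x ≠ y ∧ ∃ p q, H.Adj p q ∧ φ p = x ∧ φ q = y
  adj_sub := by
    rintro x y ⟨hne, p, q, h, rfl, rfl⟩
    exact s.adj h.adj_sub hne
  edge_vert := by
    rintro x y ⟨hne, p, q, h, rfl, rfl⟩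
    exact ⟨p, H.edge_vert h, rfl⟩
  symm := ⟨by
    rintro x y ⟨hne, p, q, h, rfl, rfl⟩
    exact ⟨hne.symm, q, p, h.symm, rfl, rfl⟩⟩

lemma proj_adj (s : Side G K v φ a b) (H : G.Subgraph) {p q : W} (h : G.Adj p q)
    (hne : φ p ≠ φ q) : (proj s H).Adj (φ p) (φ q) ↔ H.Adj p q := by
  constructor
  · rintro ⟨_, p', q', h', hp, hq⟩
    obtain ⟨rfl, rfl⟩ := s.uniq h h'.adj_sub hp.symm hq.symm hne
    exact h'
  · intro h'
    exact ⟨hne, p, q, h', rfl, rfl⟩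

lemma proj_cut (s : Side G K v φ a b) (H : G.Subgraph) (i : Fin 3) :
    (proj s H).Adj (φ (a i)) v ↔ H.Adj (a i) (b i) := by
  have := proj_adj s H (s.hab i) (by rw [s.hb]; exact s.ha i)
  rwa [s.hb] at this

/-- The subgraph meets the uncontracted part. -/
def Touch (φ : W → V) (v : V) (H : G.Subgraph) : Prop := ∃ p ∈ H.verts, φ p ≠ v

lemma parity [Fintype W] (s : Side G K v φ a b) (H : G.Subgraph)
    (hdeg : ∀ p ∈ H.verts, (H.neighborSet p).ncard = 2) (T : Set W) (hT : ∀ p ∈ T, φ p ≠ v)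
    (hc : ∀ p q, H.Adj p q → p ∈ T → φ q ≠ v → q ∈ T) :
    Even (Finset.univ.filter fun i => H.Adj (a i) (b i) ∧ a i ∈ T).card := by
  let Γ : SimpleGraph W :=
    { Adj := fun p q => H.Adj p q ∧ p ∈ T ∧ q ∈ T
      symm := ⟨fun p q h => ⟨h.1.symm, h.2.2, h.2.1⟩⟩
      loopless := ⟨fun p h => h.1.ne rfl⟩ }
  have hev := Γ.even_card_odd_degree_vertices
  have hdegΓ : ∀ p, Γ.degree p = (Γ.neighborSet p).ncard := by
    intro p
    rw [← SimpleGraph.card_neighborSet_eq_degree, ← Nat.card_eq_fintype_card]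
    rfl
  have : (Finset.univ.filter fun p => Odd (Γ.degree p)) =
      (Finset.univ.filter fun i => H.Adj (a i) (b i) ∧ a i ∈ T).image a := by
    ext p
    simp only [Finset.mem_filter, Finset.mem_univ, true_and, Finset.mem_image]
    constructor
    · intro hodd
      by_contra hcon
      rw [hdegΓ] at hodd
      by_cases hpT : p ∈ T
      · have heq : Γ.neighborSet p = H.neighborSet p := by
          ext q
          constructor
          · intro h; exact h.1
          · intro h
            refine ⟨h, hpT, hc p q h hpT ?_⟩
            intro hq
            obtain ⟨i, rfl, rfl⟩ := s.cut (SimpleGraph.Subgraph.Adj.adj_sub h) (hT p hpT) hq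
            exact hcon ⟨i, ⟨h, hpT⟩, rfl⟩
        rw [heq] at hodd
        by_cases hpv : p ∈ H.verts
        · rw [hdeg p hpv] at hodd
          exact absurd hodd (by decide)
        · have : H.neighborSet p = ∅ := by
            ext q
            simp only [SimpleGraph.Subgraph.mem_neighborSet, Set.mem_empty_iff_false, iff_false]
            exact fun h => hpv (H.edge_vert h)
          rw [this] at hodd
          simp at hodd
      · have : Γ.neighborSet p = ∅ := by
          ext q
          simp only [Set.mem_empty_iff_false, iff_false]
          exact fun h => hpT h.2.1
        rw [this] at hodd
        simp at hodd
    · rintro ⟨i, ⟨hi, hiT⟩, rfl⟩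
      rw [hdegΓ]
      have h2 := hdeg (a i) (H.edge_vert hi)
      have heq : insert (b i) (Γ.neighborSet (a i)) = H.neighborSet (a i) := by
        ext q
        simp only [Set.mem_insert_iff]
        constructor
        · rintro (rfl | h)
          · exact hi
          · exact h.1
        · intro h
          by_cases hq : φ q = v
          · obtain ⟨j, hj, rfl⟩ := s.cut (SimpleGraph.Subgraph.Adj.adj_sub h) (s.ha i) hq
            left; rw [s.ainj hj]
          · right
            exact ⟨h, hiT, hc _ _ h hiT hq⟩
      have hnot : b i ∉ Γ.neighborSet (a i) := by
        intro h
        exact hT _ h.2.2 (s.hb i)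
      rw [← heq, Set.ncard_insert_of_notMem hnot (Set.toFinite _)] at h2
      have : (Γ.neighborSet (a i)).ncard = 1 := by omega
      rw [this]; decide
  have hc2 : (Finset.univ.filter fun p => Odd (Γ.degree p)).card =
      (Finset.univ.filter fun i => H.Adj (a i) (b i) ∧ a i ∈ T).card := by
    rw [this, Finset.card_image_of_injective _ s.ainj]
  rw [← hc2]
  convert hev

lemma even_cases (X : Finset (Fin 3)) (h : Even X.card) :
    (∀ i, i ∉ X) ∨ ∃ i0, ∀ i, i ∈ X ↔ i ≠ i0 := by
  have key : ∀ X : Finset (Fin 3), X.card % 2 = 0 →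
    (∀ i, i ∉ X) ∨ ∃ i0, ∀ i, i ∈ X ↔ i ≠ i0 := by decide
  exact key X (Nat.even_iff.mp h)

lemma cut_type [Fintype W] (s : Side G K v φ a b) {H : G.Subgraph} (h : IsCircuit H) :
    (∀ i, ¬ H.Adj (a i) (b i)) ∨ ∃ i0, ∀ i, H.Adj (a i) (b i) ↔ i ≠ i0 := by
  have hp := parity s H h.2 {p | φ p ≠ v} (fun p hp => hp) (fun p q _ _ hq => hq)
  have := even_cases _ hp
  simpa [s.ha] using this

lemma nbr_v (s : Side G K v φ a b) (H : K.Subgraph) :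
    H.neighborSet v = (fun i => φ (a i)) '' {i | H.Adj (φ (a i)) v} := by
  ext y
  constructor
  · intro h
    have h' : H.Adj v y := h
    obtain ⟨p, q, hpq, hp, rfl⟩ := s.lift h'.adj_sub
    obtain ⟨i, rfl, rfl⟩ := s.cut hpq.symm h'.ne.symm hp
    exact ⟨i, h'.symm, rfl⟩
  · rintro ⟨i, hi, rfl⟩
    exact SimpleGraph.Subgraph.Adj.symm hi

lemma Side.phia_inj (s : Side G K v φ a b) : Function.Injective (fun i => φ (a i)) := by
  intro i j h
  exact s.ainj (s.inj h (s.ha i))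

lemma nbr_v_card (s : Side G K v φ a b) (H : K.Subgraph) :
    (H.neighborSet v).ncard = (Finset.univ.filter fun i => H.Adj (φ (a i)) v).card := by
  rw [nbr_v s, Set.ncard_image_of_injective _ s.phia_inj, ← Set.ncard_coe_finset]
  simp

lemma cut_type' (s : Side G K v φ a b) {H : K.Subgraph} (h : IsCircuit H) :
    (v ∉ H.verts ∧ ∀ i, ¬ H.Adj (φ (a i)) v) ∨
      (v ∈ H.verts ∧ ∃ i0, ∀ i, H.Adj (φ (a i)) v ↔ i ≠ i0) := by
  by_cases hv : v ∈ H.verts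
  · right
    refine ⟨hv, ?_⟩
    have h2 := h.2 v hv
    rw [nbr_v_card s] at h2
    rcases even_cases _ (by rw [h2]; decide) with h3 | h3
    · rw [Finset.eq_empty_of_forall_notMem h3] at h2
      simp at h2
    · simpa using h3
  · left
    exact ⟨hv, fun i hi => hv (H.edge_vert hi.symm)⟩

lemma proj_circuit [Fintype W] (s : Side G K v φ a b) {H : G.Subgraph} (h : IsCircuit H)
    (ht : Touch φ v H) : IsCircuit (proj s H) := by
  constructor
  · apply connected_of_closed
    · exact h.1.nonempty.image φ
    · rintro S hS ⟨_, ⟨p, hp, rfl⟩, hpS⟩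
      have := connected_closed h.1 (φ ⁻¹' S) ?_ hp hpS
      · rintro _ ⟨q, hq, rfl⟩
        exact this hq
      · intro p q hpq hpS
        by_cases he : φ p = φ q
        · change φ q ∈ S
          rw [← he]; exact hpS
        · exact hS _ _ ⟨he, p, q, hpq, rfl, rfl⟩ hpS
  · rintro x hx
    by_cases hxv : x = v
    · subst hxv
      rw [nbr_v_card s]
      simp only [proj_cut]
      rcases cut_type s h with h3 | ⟨i0, h3⟩
      · exfalso
        obtain ⟨p, hp, hpv⟩ := ht
        obtain ⟨q, hq, hqv⟩ := hx
        have := connected_closed h.1 {p | φ p ≠ x} ?_ hp hpv hq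
        · exact this hqv
        · intro p q hpq hp hq
          obtain ⟨i, rfl, rfl⟩ := s.cut hpq.adj_sub hp hq
          exact h3 i hpq
      · simp only [h3]
        clear h3
        revert i0; decide
    · obtain ⟨p, hp, rfl⟩ := hx
      rw [← h.2 p hp]
      have : (proj s H).neighborSet (φ p) = φ '' (H.neighborSet p) := by
        ext y
        constructor
        · rintro ⟨hne, p', q, hpq, hp', rfl⟩
          obtain rfl := s.inj hp' (hp' ▸ hxv)
          exact ⟨q, hpq, rfl⟩
        · rintro ⟨q, hq, rfl⟩
          refine ⟨?_, p, q, hq, rfl, rfl⟩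
          intro he
          have := s.inj he hxv
          exact SimpleGraph.Subgraph.Adj.ne hq this
      rw [this, Set.InjOn.ncard_image]
      intro q hq q' hq' he
      refine (s.uniq (SimpleGraph.Subgraph.Adj.adj_sub hq)
        (SimpleGraph.Subgraph.Adj.adj_sub hq') rfl he ?_).2
      intro he
      have := s.inj he hxv
      exact SimpleGraph.Subgraph.Adj.ne hq this

/-- Both sides of the cut. -/
structure Two {V₁ V₂ : Type*} (G : SimpleGraph W) (G₁ : SimpleGraph V₁) (G₂ : SimpleGraph V₂)
    (v₁ : V₁) (v₂ : V₂) (f : W → V₁) (g : W → V₂) (a b : Fin 3 → W) : Prop where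
  s1 : Side G G₁ v₁ f a b
  s2 : Side G G₂ v₂ g b a
  c1 : ∀ {p}, f p = v₁ → g p ≠ v₂
  c2 : ∀ {p}, f p ≠ v₁ → g p = v₂

variable {V₁ V₂ : Type*} {G₁ : SimpleGraph V₁} {G₂ : SimpleGraph V₂}
    {v₁ : V₁} {v₂ : V₂} {f : W → V₁} {g : W → V₂}

lemma Two.swap (t : Two G G₁ G₂ v₁ v₂ f g a b) : Two G G₂ G₁ v₂ v₁ g f b a where
  s1 := t.s2
  s2 := t.s1
  c1 := fun {p} h => fun h' => t.c1 h' h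
  c2 := fun {p} h => by
    by_contra h'
    exact h (t.c2 h')

lemma Side.ne_of_adj (s : Side G K v φ a b) {p q : W} (h : p ≠ q) (hp : φ p ≠ v) :
    φ p ≠ φ q := fun he => h (s.inj he hp)

lemma Two.ne_or (t : Two G G₁ G₂ v₁ v₂ f g a b) {p q : W} (h : p ≠ q) :
    f p ≠ f q ∨ g p ≠ g q := by
  by_cases hp : f p = v₁
  · exact Or.inr (t.s2.ne_of_adj h (t.c1 hp))
  · exact Or.inl (t.s1.ne_of_adj h hp)

/-- Gluing of two subgraphs. -/
def glue (t : Two G G₁ G₂ v₁ v₂ f g a b) (K₁ : G₁.Subgraph) (K₂ : G₂.Subgraph) :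
    G.Subgraph where
  verts := {p | (f p ≠ v₁ ∧ f p ∈ K₁.verts) ∨ (g p ≠ v₂ ∧ g p ∈ K₂.verts)}
  Adj p q := G.Adj p q ∧ (f p ≠ f q → K₁.Adj (f p) (f q)) ∧ (g p ≠ g q → K₂.Adj (g p) (g q))
  adj_sub := fun h => h.1
  edge_vert := by
    rintro p q ⟨h, h1, h2⟩
    by_cases hp : f p = v₁
    · right
      exact ⟨t.c1 hp, K₂.edge_vert (h2 (t.s2.ne_of_adj h.ne (t.c1 hp)))⟩
    · left
      exact ⟨hp, K₁.edge_vert (h1 (t.s1.ne_of_adj h.ne hp))⟩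
  symm := ⟨by
    rintro p q ⟨h, h1, h2⟩
    exact ⟨h.symm, fun hn => (h1 hn.symm).symm, fun hn => (h2 hn.symm).symm⟩⟩

lemma glue_swap (t : Two G G₁ G₂ v₁ v₂ f g a b) (K₁ : G₁.Subgraph) (K₂ : G₂.Subgraph) :
    glue t.swap K₂ K₁ = glue t K₁ K₂ := by
  apply SimpleGraph.Subgraph.ext
  · ext p
    exact or_comm
  · ext p q
    exact and_congr_right fun _ => and_comm

/-- The two subgraphs use the same cut edges. -/
def Compat (v₁ : V₁) (v₂ : V₂) (f : W → V₁) (g : W → V₂) (a b : Fin 3 → W)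
    (K₁ : G₁.Subgraph) (K₂ : G₂.Subgraph) : Prop :=
  ∀ i, K₁.Adj (f (a i)) v₁ ↔ K₂.Adj (g (b i)) v₂

lemma Compat.swap {K₁ : G₁.Subgraph} {K₂ : G₂.Subgraph} (h : Compat v₁ v₂ f g a b K₁ K₂) :
    Compat v₂ v₁ g f b a K₂ K₁ := fun i => (h i).symm

lemma glue_adj_of (t : Two G G₁ G₂ v₁ v₂ f g a b) {K₁ : G₁.Subgraph} {K₂ : G₂.Subgraph}
    (hc : Compat v₁ v₂ f g a b K₁ K₂) {p q : W} (h : G.Adj p q)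
    (h1 : K₁.Adj (f p) (f q)) : (glue t K₁ K₂).Adj p q := by
  refine ⟨h, fun _ => h1, fun h2 => ?_⟩
  by_cases hp : f p = v₁
  · have hq : f q ≠ v₁ := fun hq => h1.ne (hp.trans hq.symm)
    obtain ⟨i, rfl, rfl⟩ := t.s1.cut h.symm hq hp
    rw [hp] at h1
    rw [t.c2 hq]
    exact (hc i).mp h1.symm
  · by_cases hq : f q = v₁
    · obtain ⟨i, rfl, rfl⟩ := t.s1.cut h hp hq
      rw [hq] at h1
      rw [t.c2 hp]
      exact ((hc i).mp h1).symm
    · exact absurd ((t.c2 hp).trans (t.c2 hq).symm) h2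

lemma glue_deg (t : Two G G₁ G₂ v₁ v₂ f g a b) {K₁ : G₁.Subgraph} {K₂ : G₂.Subgraph}
    (hc : Compat v₁ v₂ f g a b K₁ K₂) {p : W} (hp : f p ≠ v₁) :
    ((glue t K₁ K₂).neighborSet p).ncard = (K₁.neighborSet (f p)).ncard := by
  have : K₁.neighborSet (f p) = f '' ((glue t K₁ K₂).neighborSet p) := by
    ext y
    constructor
    · intro h
      have h' : K₁.Adj (f p) y := h
      obtain ⟨p', q, hpq, hp', rfl⟩ := t.s1.lift h'.adj_sub
      obtain rfl := t.s1.inj hp' (hp' ▸ hp)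
      exact ⟨q, glue_adj_of t hc hpq h', rfl⟩
    · rintro ⟨q, ⟨hq, hq1, _⟩, rfl⟩
      exact hq1 (t.s1.ne_of_adj hq.ne hp)
  rw [this, Set.InjOn.ncard_image]
  intro q hq q' hq' he
  exact (t.s1.uniq hq.1 hq'.1 rfl he (t.s1.ne_of_adj hq.1.ne hp)).2

lemma glue_reg (t : Two G G₁ G₂ v₁ v₂ f g a b) {K₁ : G₁.Subgraph} {K₂ : G₂.Subgraph}
    (hc : Compat v₁ v₂ f g a b K₁ K₂)
    (h1 : ∀ x ∈ K₁.verts, (K₁.neighborSet x).ncard = 2)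
    (h2 : ∀ x ∈ K₂.verts, (K₂.neighborSet x).ncard = 2) :
    ∀ p ∈ (glue t K₁ K₂).verts, ((glue t K₁ K₂).neighborSet p).ncard = 2 := by
  rintro p (⟨hp, hp'⟩ | ⟨hp, hp'⟩)
  · rw [glue_deg t hc hp]; exact h1 _ hp'
  · rw [← glue_swap, glue_deg t.swap hc.swap hp]; exact h2 _ hp'

lemma glue_side_all (t : Two G G₁ G₂ v₁ v₂ f g a b) {K₁ : G₁.Subgraph} {K₂ : G₂.Subgraph}
    (hc : Compat v₁ v₂ f g a b K₁ K₂) (h1 : IsCircuit K₁) (S : Set W)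
    (hS : ∀ p q, (glue t K₁ K₂).Adj p q → p ∈ S → q ∈ S)
    (hcut : ∀ i, K₁.Adj (f (a i)) v₁ → a i ∈ S)
    (hex : ∃ p ∈ S, f p ∈ K₁.verts) :
    ∀ p, f p ≠ v₁ → f p ∈ K₁.verts → p ∈ S := by
  obtain ⟨p0, hp0, hp0'⟩ := hex
  have := connected_closed h1.1 {x | x = v₁ ∨ ∃ p ∈ S, f p = x} ?_ hp0' (Or.inr ⟨p0, hp0, rfl⟩)
  · intro p hp hpK
    rcases this hpK with h | ⟨q, hq, hqp⟩
    · exact absurd h hp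
    · rwa [← t.s1.inj hqp (hqp ▸ hp)]
  · intro x y hxy hx
    by_cases hy : y = v₁
    · exact Or.inl hy
    right
    by_cases hxv : x = v₁
    · subst hxv
      obtain ⟨p, q, hpq, hp, rfl⟩ := t.s1.lift hxy.adj_sub
      obtain ⟨i, rfl, rfl⟩ := t.s1.cut hpq.symm hy hp
      exact ⟨_, hcut i hxy.symm, rfl⟩
    · rcases hx with hx | ⟨p, hp, rfl⟩
      · exact absurd hx hxv
      obtain ⟨p', q, hpq, hp', rfl⟩ := t.s1.lift hxy.adj_sub
      obtain rfl := t.s1.inj hp' (hp' ▸ hxv)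
      exact ⟨q, hS _ _ (glue_adj_of t hc hpq hxy) hp, rfl⟩

lemma glue_side_none (t : Two G G₁ G₂ v₁ v₂ f g a b) {K₁ : G₁.Subgraph} {K₂ : G₂.Subgraph}
    (hc : Compat v₁ v₂ f g a b K₁ K₂) (h1 : IsCircuit K₁) (hv : v₁ ∈ K₁.verts) (S : Set W)
    (hS : ∀ p q, (glue t K₁ K₂).Adj p q → p ∈ S → q ∈ S)
    (hcut : ∀ i, K₁.Adj (f (a i)) v₁ → a i ∉ S) :
    ∀ p, f p ≠ v₁ → f p ∈ K₁.verts → p ∉ S := by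
  intro p0 hp0 hp0K hp0S
  have := connected_closed h1.1 {x | x ≠ v₁ ∧ ∃ p ∈ S, f p = x} ?_ hp0K ⟨hp0, p0, hp0S, rfl⟩ hv
  · exact this.1 rfl
  · rintro x y hxy ⟨hxv, p, hp, rfl⟩
    obtain ⟨p', q, hpq, hp', rfl⟩ := t.s1.lift hxy.adj_sub
    obtain rfl := t.s1.inj hp' (hp' ▸ hxv)
    refine ⟨?_, q, hS _ _ (glue_adj_of t hc hpq hxy) hp, rfl⟩
    intro hq
    obtain ⟨i, rfl, rfl⟩ := t.s1.cut hpq hxv hq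
    rw [hq] at hxy
    exact hcut i hxy hp

lemma glue_cut (t : Two G G₁ G₂ v₁ v₂ f g a b) {K₁ : G₁.Subgraph} {K₂ : G₂.Subgraph}
    (hc : Compat v₁ v₂ f g a b K₁ K₂) (i : Fin 3) :
    (glue t K₁ K₂).Adj (a i) (b i) ↔ K₁.Adj (f (a i)) v₁ := by
  constructor
  · rintro ⟨_, h, _⟩
    rw [t.s1.hb] at h
    exact h (t.s1.ha i)
  · intro h
    apply glue_adj_of t hc (t.s1.hab i)
    rwa [t.s1.hb]

lemma even_ne (P : Fin 3 → Prop) (i0 : Fin 3)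
    (h : Even (Finset.univ.filter fun i => i ≠ i0 ∧ P i).card) :
    (∀ i, i ≠ i0 → P i) ∨ (∀ i, i ≠ i0 → ¬ P i) := by
  have key : ∀ (Y : Finset (Fin 3)) (i0 : Fin 3),
      (Finset.univ.filter fun i => i ≠ i0 ∧ i ∈ Y).card % 2 = 0 →
      (∀ i, i ≠ i0 → i ∈ Y) ∨ (∀ i, i ≠ i0 → ¬ i ∈ Y) := by decide
  have := key (Finset.univ.filter P) i0 (by
    rw [← Nat.even_iff]
    simpa using h)
  simpa using this

lemma glue_circuit [Fintype W] (t : Two G G₁ G₂ v₁ v₂ f g a b) {K₁ : G₁.Subgraph}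
    {K₂ : G₂.Subgraph} (h1 : IsCircuit K₁) (h2 : IsCircuit K₂) (i0 : Fin 3)
    (hi1 : ∀ i, K₁.Adj (f (a i)) v₁ ↔ i ≠ i0) (hi2 : ∀ i, K₂.Adj (g (b i)) v₂ ↔ i ≠ i0) :
    IsCircuit (glue t K₁ K₂) := by
  have hc : Compat v₁ v₂ f g a b K₁ K₂ := fun i => (hi1 i).trans (hi2 i).symm
  have hreg := glue_reg t hc h1.2 h2.2
  obtain ⟨j, hj⟩ : ∃ j : Fin 3, j ≠ i0 := exists_ne i0
  have hv1 : v₁ ∈ K₁.verts := K₁.edge_vert ((hi1 j).mpr hj).symm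
  have hv2 : v₂ ∈ K₂.verts := K₂.edge_vert ((hi2 j).mpr hj).symm
  have hadj : ∀ i, i ≠ i0 → (glue t K₁ K₂).Adj (a i) (b i) := fun i hi =>
    (glue_cut t hc i).mpr ((hi1 i).mpr hi)
  refine ⟨connected_of_closed ⟨a j, (glue t K₁ K₂).edge_vert (hadj j hj)⟩ ?_, hreg⟩
  rintro S hS ⟨x, hx, hxS⟩
  have hS' : ∀ p q, (glue t.swap K₂ K₁).Adj p q → p ∈ S → q ∈ S := by
    rw [glue_swap]; exact hS
  have hev := parity t.s1 _ hreg {p | p ∈ S ∧ f p ≠ v₁} (fun p hp => hp.2)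
    (fun p q hpq hp hq => ⟨hS _ _ hpq hp.1, hq⟩)
  simp only [glue_cut t hc, hi1, Set.mem_ofPred_eq, t.s1.ha, and_true, ne_eq, not_false_eq_true] at hev
  rcases even_ne (fun i => a i ∈ S) i0 hev with hall | hnone
  · have e1 := glue_side_all t hc h1 S hS (fun i hi => hall i ((hi1 i).mp hi))
      ⟨a j, hall j hj, K₁.edge_vert ((hi1 j).mpr hj)⟩
    have hb : ∀ i, i ≠ i0 → b i ∈ S := fun i hi => hS _ _ (hadj i hi) (hall i hi)
    have e2 := glue_side_all t.swap hc.swap h2 S hS' (fun i hi => hb i ((hi2 i).mp hi))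
      ⟨b j, hb j hj, K₂.edge_vert ((hi2 j).mpr hj)⟩
    rintro p (⟨hp, hp'⟩ | ⟨hp, hp'⟩)
    · exact e1 p hp hp'
    · exact e2 p hp hp'
  · exfalso
    have hb : ∀ i, i ≠ i0 → b i ∉ S := fun i hi hh =>
      hnone i hi (hS _ _ (hadj i hi).symm hh)
    rcases hx with ⟨hp, hp'⟩ | ⟨hp, hp'⟩
    · exact glue_side_none t hc h1 hv1 S hS (fun i hi => hnone i ((hi1 i).mp hi)) x hp hp' hxS
    · exact glue_side_none t.swap hc.swap h2 hv2 S hS' (fun i hi => hb i ((hi2 i).mp hi))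
        x hp hp' hxS

lemma compat_bot (s : Side G G₁ v₁ f a b) {K₁ : G₁.Subgraph} (hv : v₁ ∉ K₁.verts) :
    Compat v₁ v₂ f g a b K₁ (⊥ : G₂.Subgraph) := by
  intro i
  simp only [SimpleGraph.Subgraph.not_bot_adj, iff_false]
  exact fun h => hv (K₁.edge_vert h.symm)

lemma glue_bot_circuit (t : Two G G₁ G₂ v₁ v₂ f g a b) {K₁ : G₁.Subgraph}
    (h1 : IsCircuit K₁) (hv : v₁ ∉ K₁.verts) : IsCircuit (glue t K₁ ⊥) := by
  have hc : Compat v₁ v₂ f g a b K₁ (⊥ : G₂.Subgraph) := compat_bot t.s1 hv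
  refine ⟨connected_of_closed ?_ ?_, glue_reg t hc h1.2 (by simp)⟩
  · obtain ⟨x, hx⟩ := h1.1.nonempty
    have hxv : x ≠ v₁ := fun h => hv (h ▸ hx)
    obtain ⟨p, rfl⟩ := t.s1.surj hxv
    exact ⟨p, Or.inl ⟨hxv, hx⟩⟩
  · rintro S hS ⟨x, hx, hxS⟩
    have hx' : f x ∈ K₁.verts := by
      rcases hx with h | h
      · exact h.2
      · simp at h
    have e1 := glue_side_all t hc h1 S hS (fun i hi => absurd (K₁.edge_vert hi.symm) hv)
      ⟨x, hxS, hx'⟩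
    rintro p (⟨hp, hp'⟩ | ⟨hp, hp'⟩)
    · exact e1 p hp hp'
    · simp at hp'

lemma proj_glue (t : Two G G₁ G₂ v₁ v₂ f g a b) {K₁ : G₁.Subgraph} {K₂ : G₂.Subgraph}
    (hc : Compat v₁ v₂ f g a b K₁ K₂)
    (hv : v₁ ∈ K₁.verts ↔ ∃ p, g p ≠ v₂ ∧ g p ∈ K₂.verts) :
    proj t.s1 (glue t K₁ K₂) = K₁ := by
  apply SimpleGraph.Subgraph.ext
  · ext x
    by_cases hx : x = v₁
    · rw [hx, hv]
      constructor
      · rintro ⟨p, ⟨h, _⟩ | h, hp⟩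
        · exact absurd hp h
        · exact ⟨p, h⟩
      · rintro ⟨p, h⟩
        exact ⟨p, Or.inr h, t.swap.c2 h.1⟩
    · constructor
      · rintro ⟨p, h | h, rfl⟩
        · exact h.2
        · exact absurd (t.swap.c2 h.1) hx
      · intro h
        obtain ⟨p, rfl⟩ := t.s1.surj hx
        exact ⟨p, Or.inl ⟨hx, h⟩, rfl⟩
  · ext x y
    constructor
    · rintro ⟨hne, p, q, h, rfl, rfl⟩
      exact h.2.1 hne
    · intro h
      obtain ⟨p, q, hpq, rfl, rfl⟩ := t.s1.lift h.adj_sub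
      exact ⟨h.ne, p, q, glue_adj_of t hc hpq h, rfl, rfl⟩

/-- Projection of a multiset of subgraphs to one side. -/
noncomputable def pm (s : Side G K v φ a b) (C : Multiset G.Subgraph) : Multiset K.Subgraph :=
  (C.filter (Touch φ v)).map (proj s)

lemma pm_add (s : Side G K v φ a b) (C D : Multiset G.Subgraph) :
    pm s (C + D) = pm s C + pm s D := by
  simp [pm]

lemma pm_single (s : Side G K v φ a b) (H : G.Subgraph) (h : Touch φ v H) :
    pm s {H} = {proj s H} := by
  simp [pm, Multiset.filter_singleton, h]

lemma touch_of_adj (s : Side G K v φ a b) {H : G.Subgraph} {p q : W} (h : H.Adj p q)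
    (hne : φ p ≠ φ q) : Touch φ v H := by
  by_cases hp : φ p = v
  · exact ⟨q, H.edge_vert h.symm, fun hq => hne (hp.trans hq.symm)⟩
  · exact ⟨p, H.edge_vert h, hp⟩

lemma pm_count (s : Side G K v φ a b) (C : Multiset G.Subgraph) {p q : W} (h : G.Adj p q)
    (hne : φ p ≠ φ q) :
    (pm s C).countP (fun H => s(φ p, φ q) ∈ H.edgeSet) =
      C.countP (fun H => s(p, q) ∈ H.edgeSet) := by
  rw [pm, Multiset.countP_map, Multiset.filter_filter, Multiset.countP_eq_card_filter]
  congr 1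
  apply Multiset.filter_congr
  intro H _
  simp only [SimpleGraph.Subgraph.mem_edgeSet]
  rw [proj_adj s H h hne]
  exact ⟨fun h => h.1, fun h' => ⟨h', touch_of_adj s h' hne⟩⟩

lemma pm_cidc [Fintype W] (s : Side G K v φ a b) {C : Multiset G.Subgraph} (h : IsCiDC G C) :
    IsCiDC K (pm s C) := by
  constructor
  · intro H hH
    simp only [pm, Multiset.mem_map, Multiset.mem_filter] at hH
    obtain ⟨H', ⟨h1, h2⟩, rfl⟩ := hH
    exact proj_circuit s (h.1 _ h1) h2
  · intro e
    induction e using Sym2.ind with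
    | _ x y =>
      intro hxy
      have hxy' : K.Adj x y := hxy
      obtain ⟨p, q, hpq, rfl, rfl⟩ := s.lift hxy'
      rw [pm_count s C hpq hxy'.ne]
      exact h.2 _ hpq

lemma cidc_of_pm (t : Two G G₁ G₂ v₁ v₂ f g a b) {C : Multiset G.Subgraph}
    (hC : ∀ H ∈ C, IsCircuit H) (h1 : IsCiDC G₁ (pm t.s1 C)) (h2 : IsCiDC G₂ (pm t.s2 C)) :
    IsCiDC G C := by
  refine ⟨hC, ?_⟩
  intro e
  induction e using Sym2.ind with
  | _ p q =>
    intro hpq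
    have hpq' : G.Adj p q := hpq
    rcases t.ne_or hpq'.ne with h | h
    · rw [← pm_count t.s1 C hpq' h]
      exact h1.2 _ (t.s1.adj hpq' h)
    · rw [← pm_count t.s2 C hpq' h]
      exact h2.2 _ (t.s2.adj hpq' h)

lemma type_count {α : Type*} (C : Multiset α) (cut : Fin 3 → α → Prop)
    (hC : ∀ x ∈ C, (∀ i, ¬ cut i x) ∨ ∃ i0, ∀ i, cut i x ↔ i ≠ i0)
    (h2 : ∀ i, C.countP (cut i) = 2) (i0 : Fin 3) :
    C.countP (fun x => ∀ i, cut i x ↔ i ≠ i0) = 1 := by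
  have key : ∀ C : Multiset α, (∀ x ∈ C, (∀ i, ¬ cut i x) ∨ ∃ i0, ∀ i, cut i x ↔ i ≠ i0) →
      C.countP (cut 0) = C.countP (fun x => ∀ i, cut i x ↔ i ≠ 1) +
        C.countP (fun x => ∀ i, cut i x ↔ i ≠ 2) ∧
      C.countP (cut 1) = C.countP (fun x => ∀ i, cut i x ↔ i ≠ 0) +
        C.countP (fun x => ∀ i, cut i x ↔ i ≠ 2) ∧
      C.countP (cut 2) = C.countP (fun x => ∀ i, cut i x ↔ i ≠ 0) +
        C.countP (fun x => ∀ i, cut i x ↔ i ≠ 1) := by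
    intro C
    induction C using Multiset.induction_on with
    | empty => simp
    | cons x C ih =>
      intro hC
      have ih' := ih (fun y hy => hC y (Multiset.mem_cons_of_mem hy))
      simp only [Multiset.countP_cons]
      rcases hC x (Multiset.mem_cons_self x C) with h | ⟨i0, h⟩
      · have h' : ∀ j : Fin 3, ¬ ∀ i, cut i x ↔ i ≠ j := by
          intro j hj
          obtain ⟨k, hk⟩ : ∃ k : Fin 3, k ≠ j := exists_ne j
          exact h k ((hj k).mpr hk)
        simp only [h', if_false, add_zero]
        simpa only [h, if_false, add_zero] using ih'
      · have h' : ∀ j : Fin 3, (∀ i, cut i x ↔ i ≠ j) ↔ j = i0 := by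
          intro j
          simp only [h]
          constructor
          · intro hh
            by_contra hne
            exact (hh j).mp hne rfl
          · rintro rfl i
            exact Iff.rfl
        simp only [h']
        simp only [h]
        obtain ⟨e0, e1, e2⟩ := ih'
        simp only [e0, e1, e2]
        have hi : i0 = 0 ∨ i0 = 1 ∨ i0 = 2 := by
          clear h h'
          revert i0; decide
        rcases hi with rfl | rfl | rfl <;> refine ⟨?_, ?_, ?_⟩ <;> simp <;> omega
  have := key C hC
  simp only [h2] at this
  fin_cases i0 <;> simp only [Fin.zero_eta, Fin.mk_one, Fin.reduceFinMk] <;> omega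

lemma cidc_type [Fintype W] (s : Side G K v φ a b) {C : Multiset G.Subgraph}
    (h : IsCiDC G C) (i0 : Fin 3) :
    C.countP (fun H => ∀ i, H.Adj (a i) (b i) ↔ i ≠ i0) = 1 := by
  apply type_count C (fun i H => H.Adj (a i) (b i))
  · intro H hH
    exact cut_type s (h.1 H hH)
  · intro i
    exact h.2 s(a i, b i) (s.hab i)

lemma cidc_type' (s : Side G K v φ a b) {C : Multiset K.Subgraph}
    (h : IsCiDC K C) (i0 : Fin 3) :
    C.countP (fun H => ∀ i, H.Adj (φ (a i)) v ↔ i ≠ i0) = 1 := by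
  apply type_count C (fun i H => H.Adj (φ (a i)) v)
  · intro H hH
    rcases cut_type' s (h.1 H hH) with h | h
    · exact Or.inl h.2
    · exact Or.inr h.2
  · intro i
    have := s.adj (s.hab i) (by rw [s.hb]; exact s.ha i)
    rw [s.hb] at this
    exact h.2 s(φ (a i), v) this

lemma countP_one {α : Type*} {C : Multiset α} {P : α → Prop} [DecidablePred P] (h : C.countP P = 1) {x y : α}
    (hx : x ∈ C) (hy : y ∈ C) (hpx : P x) (hpy : P y) : x = y := by
  rw [Multiset.countP_eq_card_filter, Multiset.card_eq_one] at h
  obtain ⟨z, hz⟩ := h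
  have h1 : x ∈ C.filter P := Multiset.mem_filter.mpr ⟨hx, hpx⟩
  have h2 : y ∈ C.filter P := Multiset.mem_filter.mpr ⟨hy, hpy⟩
  rw [hz, Multiset.mem_singleton] at h1 h2
  rw [h1, h2]

lemma countP_one_count {α : Type*} {C : Multiset α} {P : α → Prop} [DecidablePred P] (h : C.countP P = 1) {x : α}
    (hx : x ∈ C) (hpx : P x) : C.count x = 1 := by
  have h1 : C.count x ≤ C.countP P := by
    rw [← Multiset.count_filter_of_pos hpx, Multiset.countP_eq_card_filter]
    exact Multiset.count_le_card _ _
  have h2 := Multiset.count_pos.mpr hx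
  omega

lemma mem_pm (s : Side G K v φ a b) {C : Multiset G.Subgraph} {H : G.Subgraph} (h : H ∈ C)
    (ht : Touch φ v H) : proj s H ∈ pm s C :=
  Multiset.mem_map_of_mem _ (Multiset.mem_filter.mpr ⟨h, ht⟩)

lemma touch_of_type (s : Side G K v φ a b) {H : G.Subgraph} {i : Fin 3}
    (h : H.Adj (a i) (b i)) : Touch φ v H :=
  touch_of_adj s h (by rw [s.hb]; exact s.ha i)

lemma proj_inj2 (t : Two G G₁ G₂ v₁ v₂ f g a b) {H H' : G.Subgraph} (h : IsCircuit H)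
    (h' : IsCircuit H') (e1 : proj t.s1 H = proj t.s1 H') (e2 : proj t.s2 H = proj t.s2 H') :
    H = H' := by
  apply circuit_ext h h'
  have key : ∀ p q, G.Adj p q → (H.Adj p q ↔ H'.Adj p q) := by
    intro p q hpq
    rcases t.ne_or hpq.ne with hne | hne
    · rw [← proj_adj t.s1 H hpq hne, e1, proj_adj t.s1 H' hpq hne]
    · rw [← proj_adj t.s2 H hpq hne, e2, proj_adj t.s2 H' hpq hne]
  intro p q
  exact ⟨fun h => (key p q h.adj_sub).mp h, fun h => (key p q h.adj_sub).mpr h⟩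

lemma no_cut_verts (s : Side G K v φ a b) {H : G.Subgraph} (h : IsCircuit H)
    (hc : ∀ i, ¬ H.Adj (a i) (b i)) (ht : Touch φ v H) : ∀ p ∈ H.verts, φ p ≠ v := by
  obtain ⟨p, hp, hpv⟩ := ht
  apply connected_closed h.1 {p | φ p ≠ v} _ hp hpv
  intro p q hpq hp hq
  obtain ⟨i, rfl, rfl⟩ := s.cut hpq.adj_sub hp hq
  exact hc i hpq

lemma proj_inj1 (s : Side G K v φ a b) {H H' : G.Subgraph} (h : IsCircuit H)
    (h' : IsCircuit H') (hH : ∀ p ∈ H.verts, φ p ≠ v) (e1 : proj s H = proj s H') : H = H' := by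
  have hH' : ∀ p ∈ H'.verts, φ p ≠ v := by
    intro p hp hpv
    have : φ p ∈ (proj s H').verts := ⟨p, hp, rfl⟩
    rw [← e1] at this
    obtain ⟨q, hq, hqp⟩ := this
    exact hH q hq (hqp.trans hpv)
  apply circuit_ext h h'
  intro p q
  constructor
  · intro hpq
    have hne := s.ne_of_adj hpq.ne (hH p (H.edge_vert hpq))
    rwa [← proj_adj s H' hpq.adj_sub hne, ← e1, proj_adj s H hpq.adj_sub hne]
  · intro hpq
    have hne := s.ne_of_adj hpq.ne (hH' p (H'.edge_vert hpq))
    rwa [← proj_adj s H hpq.adj_sub hne, e1, proj_adj s H' hpq.adj_sub hne]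

lemma count_side (s : Side G K v φ a b) {C : Multiset G.Subgraph} (hC : IsCiDC G C)
    {H : G.Subgraph} (h : IsCircuit H) (hc : ∀ i, ¬ H.Adj (a i) (b i)) (ht : Touch φ v H) :
    C.count H = (pm s C).count (proj s H) := by
  rw [pm, Multiset.count_map, Multiset.filter_filter, Multiset.count_eq_card_filter_eq]
  congr 1
  apply Multiset.filter_congr
  intro H' hH'
  constructor
  · rintro rfl
    exact ⟨rfl, ht⟩
  · rintro ⟨e, _⟩
    exact proj_inj1 s h (hC.1 _ hH') (no_cut_verts s h hc ht) e

lemma mem_of_pm_eq [Fintype W] (t : Two G G₁ G₂ v₁ v₂ f g a b) {C C' : Multiset G.Subgraph}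
    (hC : IsCiDC G C) (hC' : IsCiDC G C') (e1 : pm t.s1 C = pm t.s1 C')
    (e2 : pm t.s2 C = pm t.s2 C') {H : G.Subgraph} (hH : H ∈ C) (i0 : Fin 3)
    (hi : ∀ i, H.Adj (a i) (b i) ↔ i ≠ i0) : H ∈ C' := by
  have hpos : 0 < C'.countP (fun H => ∀ i, H.Adj (a i) (b i) ↔ i ≠ i0) := by
    rw [cidc_type t.s1 hC']; omega
  rw [Multiset.countP_pos] at hpos
  obtain ⟨H', hH', hi'⟩ := hpos
  obtain ⟨j, hj⟩ : ∃ j : Fin 3, j ≠ i0 := exists_ne i0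
  have ha := (hi j).mpr hj
  have ha' := (hi' j).mpr hj
  have q1 : proj t.s1 H = proj t.s1 H' := by
    apply countP_one (cidc_type' t.s1 (pm_cidc t.s1 hC) i0)
    · exact mem_pm t.s1 hH (touch_of_type t.s1 ha)
    · rw [e1]; exact mem_pm t.s1 hH' (touch_of_type t.s1 ha')
    · intro i; rw [proj_cut, hi]
    · intro i; rw [proj_cut, hi']
  have q2 : proj t.s2 H = proj t.s2 H' := by
    apply countP_one (cidc_type' t.s2 (pm_cidc t.s2 hC) i0)
    · exact mem_pm t.s2 hH (touch_of_type t.s2 ha.symm)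
    · rw [e2]; exact mem_pm t.s2 hH' (touch_of_type t.s2 ha'.symm)
    · intro i; rw [proj_cut, SimpleGraph.Subgraph.adj_comm, hi]
    · intro i; rw [proj_cut, SimpleGraph.Subgraph.adj_comm, hi']
  rwa [proj_inj2 t (hC.1 _ hH) (hC'.1 _ hH') q1 q2]

lemma pm_inj [Fintype W] (t : Two G G₁ G₂ v₁ v₂ f g a b) {C C' : Multiset G.Subgraph}
    (hC : IsCiDC G C) (hC' : IsCiDC G C') (e1 : pm t.s1 C = pm t.s1 C')
    (e2 : pm t.s2 C = pm t.s2 C') : C = C' := by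
  ext H
  by_cases h : IsCircuit H
  · rcases cut_type t.s1 h with hc | ⟨i0, hi⟩
    · obtain ⟨p, hp⟩ := h.1.nonempty
      by_cases hpv : f p = v₁
      · have hc' : ∀ i, ¬ H.Adj (b i) (a i) := fun i hh => hc i hh.symm
        have ht : Touch g v₂ H := ⟨p, hp, t.c1 hpv⟩
        rw [count_side t.s2 hC h hc' ht, count_side t.s2 hC' h hc' ht, e2]
      · have ht : Touch f v₁ H := ⟨p, hp, hpv⟩
        rw [count_side t.s1 hC h hc ht, count_side t.s1 hC' h hc ht, e1]
    · by_cases hH : H ∈ C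
      · have hH' := mem_of_pm_eq t hC hC' e1 e2 hH i0 hi
        rw [countP_one_count (cidc_type t.s1 hC i0) hH hi,
          countP_one_count (cidc_type t.s1 hC' i0) hH' hi]
      · have hH' : H ∉ C' := fun hh => hH (mem_of_pm_eq t hC' hC e1.symm e2.symm hh i0 hi)
        rw [Multiset.count_eq_zero_of_notMem hH, Multiset.count_eq_zero_of_notMem hH']
  · rw [Multiset.count_eq_zero_of_notMem (fun hh => h (hC.1 _ hh)),
      Multiset.count_eq_zero_of_notMem (fun hh => h (hC'.1 _ hh))]

lemma type_split {α : Type*} (C : Multiset α) (cut : Fin 3 → α → Prop) (N : α → Prop)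
    (hC : ∀ x ∈ C, (¬ N x ∧ ∀ i, ¬ cut i x) ∨ (N x ∧ ∃ i0, ∀ i, cut i x ↔ i ≠ i0)) :
    C = C.filter (fun x => ¬ N x) + (C.filter (fun x => ∀ i, cut i x ↔ i ≠ 0) +
      (C.filter (fun x => ∀ i, cut i x ↔ i ≠ 1) + C.filter (fun x => ∀ i, cut i x ↔ i ≠ 2))) := by
  induction C using Multiset.induction_on with
  | empty => simp
  | cons x C ih =>
    have ih' := ih (fun y hy => hC y (Multiset.mem_cons_of_mem hy))
    simp only [Multiset.filter_cons]
    rcases hC x (Multiset.mem_cons_self x C) with ⟨hN, h⟩ | ⟨hN, i0, h⟩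
    · have h' : ∀ j : Fin 3, ¬ ∀ i, cut i x ↔ i ≠ j := by
        intro j hj
        obtain ⟨k, hk⟩ : ∃ k : Fin 3, k ≠ j := exists_ne j
        exact h k ((hj k).mpr hk)
      rw [if_pos hN, if_neg (h' 0), if_neg (h' 1), if_neg (h' 2)]
      conv_lhs => rw [ih', ← Multiset.singleton_add]
      abel
    · have h' : ∀ j : Fin 3, (∀ i, cut i x ↔ i ≠ j) ↔ j = i0 := by
        intro j
        simp only [h]
        constructor
        · intro hh
          by_contra hne
          exact (hh j).mp hne rfl
        · rintro rfl i
          exact Iff.rfl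
      simp only [h', hN]
      conv_lhs => rw [ih', ← Multiset.singleton_add]
      fin_cases i0 <;> simp

lemma cidc_split (s : Side G K v φ a b) {C : Multiset K.Subgraph} (h : IsCiDC K C) :
    ∃ x : Fin 3 → K.Subgraph, (∀ j, x j ∈ C) ∧ (∀ j i, (x j).Adj (φ (a i)) v ↔ i ≠ j) ∧
      C = C.filter (fun H => ¬ v ∈ H.verts) + ({x 0} + ({x 1} + {x 2})) := by
  have hx : ∀ j, ∃ x, C.filter (fun H => ∀ i, H.Adj (φ (a i)) v ↔ i ≠ j) = {x} := by
    intro j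
    have := cidc_type' s h j
    rwa [Multiset.countP_eq_card_filter, Multiset.card_eq_one] at this
  choose x hx using hx
  have hmem : ∀ j, x j ∈ C.filter (fun H => ∀ i, H.Adj (φ (a i)) v ↔ i ≠ j) := by
    intro j; rw [hx]; simp
  refine ⟨x, fun j => (Multiset.mem_filter.mp (hmem j)).1,
    fun j => (Multiset.mem_filter.mp (hmem j)).2, ?_⟩
  have := type_split C (fun i H => H.Adj (φ (a i)) v) (fun H => v ∈ H.verts)
    (fun H hH => cut_type' s (h.1 H hH))
  rwa [hx 0, hx 1, hx 2] at this

lemma glue_bot_touch (t : Two G G₁ G₂ v₁ v₂ f g a b) {K₁ : G₁.Subgraph}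
    (h1 : IsCircuit K₁) (hv : v₁ ∉ K₁.verts) : Touch f v₁ (glue t K₁ ⊥) := by
  obtain ⟨x, hx⟩ := h1.1.nonempty
  have hxv : x ≠ v₁ := fun h => hv (h ▸ hx)
  obtain ⟨p, rfl⟩ := t.s1.surj hxv
  exact ⟨p, Or.inl ⟨hxv, hx⟩, hxv⟩

lemma glue_bot_not_touch (t : Two G G₁ G₂ v₁ v₂ f g a b) (K₁ : G₁.Subgraph) :
    ¬ Touch g v₂ (glue t K₁ ⊥) := by
  rintro ⟨p, h | h, hp⟩
  · exact hp (t.c2 h.1)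
  · simp at h

lemma pm_glue_bot (t : Two G G₁ G₂ v₁ v₂ f g a b) (N : Multiset G₁.Subgraph)
    (hN : ∀ H ∈ N, IsCircuit H ∧ v₁ ∉ H.verts) :
    pm t.s1 (N.map (fun H => glue t H ⊥)) = N := by
  rw [pm, Multiset.filter_eq_self.mpr, Multiset.map_map]
  · conv_rhs => rw [← Multiset.map_id N]
    apply Multiset.map_congr rfl
    intro H hH
    apply proj_glue t (compat_bot t.s1 (hN H hH).2)
    simp [(hN H hH).2]
  · intro H hH
    obtain ⟨H', hH', rfl⟩ := Multiset.mem_map.mp hH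
    exact glue_bot_touch t (hN H' hH').1 (hN H' hH').2

lemma pm_glue_bot' (t : Two G G₁ G₂ v₁ v₂ f g a b) (N : Multiset G₁.Subgraph) :
    pm t.s2 (N.map (fun H => glue t H ⊥)) = 0 := by
  rw [pm, Multiset.filter_eq_nil.mpr, Multiset.map_zero]
  intro H hH
  obtain ⟨H', hH', rfl⟩ := Multiset.mem_map.mp hH
  exact glue_bot_not_touch t H'

lemma pm_glue (t : Two G G₁ G₂ v₁ v₂ f g a b) {K₁ : G₁.Subgraph}
    {K₂ : G₂.Subgraph} (i0 : Fin 3)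
    (hi1 : ∀ i, K₁.Adj (f (a i)) v₁ ↔ i ≠ i0) (hi2 : ∀ i, K₂.Adj (g (b i)) v₂ ↔ i ≠ i0) :
    pm t.s1 {glue t K₁ K₂} = {K₁} := by
  have hc : Compat v₁ v₂ f g a b K₁ K₂ := fun i => (hi1 i).trans (hi2 i).symm
  obtain ⟨j, hj⟩ : ∃ j : Fin 3, j ≠ i0 := exists_ne i0
  have k1 := (hi1 j).mpr hj
  have k2 := (hi2 j).mpr hj
  rw [pm_single, proj_glue t hc]
  · exact ⟨fun _ => ⟨b j, t.s2.ha j, K₂.edge_vert k2⟩, fun _ => K₁.edge_vert k1.symm⟩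
  · exact ⟨a j, Or.inl ⟨t.s1.ha j, K₁.edge_vert k1⟩, t.s1.ha j⟩

lemma pm_surj [Fintype W] (t : Two G G₁ G₂ v₁ v₂ f g a b) {C₁ : Multiset G₁.Subgraph}
    {C₂ : Multiset G₂.Subgraph} (h1 : IsCiDC G₁ C₁) (h2 : IsCiDC G₂ C₂) :
    ∃ C, IsCiDC G C ∧ pm t.s1 C = C₁ ∧ pm t.s2 C = C₂ := by
  obtain ⟨x, hx, hxt, hxs⟩ := cidc_split t.s1 h1
  obtain ⟨y, hy, hyt, hys⟩ := cidc_split t.s2 h2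
  let C : Multiset G.Subgraph :=
    (C₁.filter (fun H => ¬ v₁ ∈ H.verts)).map (fun H => glue t H ⊥) +
    ((C₂.filter (fun H => ¬ v₂ ∈ H.verts)).map (fun H => glue t.swap H ⊥) +
    ({glue t (x 0) (y 0)} + ({glue t (x 1) (y 1)} + {glue t (x 2) (y 2)})))
  have hN1 : ∀ H ∈ C₁.filter (fun H => ¬ v₁ ∈ H.verts), IsCircuit H ∧ v₁ ∉ H.verts := by
    intro H hH
    rw [Multiset.mem_filter] at hH
    exact ⟨h1.1 H hH.1, hH.2⟩
  have hN2 : ∀ H ∈ C₂.filter (fun H => ¬ v₂ ∈ H.verts), IsCircuit H ∧ v₂ ∉ H.verts := by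
    intro H hH
    rw [Multiset.mem_filter] at hH
    exact ⟨h2.1 H hH.1, hH.2⟩
  have p1 : pm t.s1 C = C₁ := by
    simp only [C, pm_add]
    rw [pm_glue_bot t _ hN1, pm_glue_bot' t.swap, pm_glue t 0 (hxt 0) (hyt 0),
      pm_glue t 1 (hxt 1) (hyt 1), pm_glue t 2 (hxt 2) (hyt 2), zero_add, ← hxs]
  have p2 : pm t.s2 C = C₂ := by
    simp only [C, pm_add]
    rw [pm_glue_bot' t, pm_glue_bot t.swap _ hN2, zero_add,
      ← glue_swap t, ← glue_swap t, ← glue_swap t, pm_glue t.swap 0 (hyt 0) (hxt 0),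
      pm_glue t.swap 1 (hyt 1) (hxt 1), pm_glue t.swap 2 (hyt 2) (hxt 2), ← hys]
  have hg : ∀ j, IsCircuit (glue t (x j) (y j)) := fun j =>
    glue_circuit t (h1.1 _ (hx j)) (h2.1 _ (hy j)) j (hxt j) (hyt j)
  refine ⟨C, cidc_of_pm t ?_ (p1 ▸ h1) (p2 ▸ h2), p1, p2⟩
  intro H hH
  simp only [C, Multiset.mem_add, Multiset.mem_map, Multiset.mem_singleton] at hH
  rcases hH with ⟨H', hH', rfl⟩ | ⟨H', hH', rfl⟩ | rfl | rfl | rfl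
  · exact glue_bot_circuit t (hN1 _ hH').1 (hN1 _ hH').2
  · exact glue_bot_circuit t.swap (hN2 _ hH').1 (hN2 _ hH').2
  · exact hg 0
  · exact hg 1
  · exact hg 2

lemma nu_two [Fintype W] (t : Two G G₁ G₂ v₁ v₂ f g a b) : nu G = nu G₁ * nu G₂ := by
  unfold nu
  rw [← Set.ncard_prod]
  have himg : {C | IsCiDC G₁ C} ×ˢ {C | IsCiDC G₂ C} =
      (fun C => (pm t.s1 C, pm t.s2 C)) '' {C | IsCiDC G C} := by
    ext ⟨C₁, C₂⟩
    constructor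
    · rintro ⟨h1, h2⟩
      obtain ⟨C, hC, rfl, rfl⟩ := pm_surj t h1 h2
      exact ⟨C, hC, rfl⟩
    · rintro ⟨C, hC, he⟩
      obtain ⟨rfl, rfl⟩ := Prod.mk.inj he
      exact ⟨pm_cidc t.s1 hC, pm_cidc t.s2 hC⟩
  rw [himg, Set.InjOn.ncard_image]
  intro C hC C' hC' he
  obtain ⟨e1, e2⟩ := Prod.mk.inj he
  exact pm_inj t hC hC' e1 e2

lemma vec3_inj {α : Type*} {x y z : α} (h1 : x ≠ y) (h2 : x ≠ z) (h3 : y ≠ z) :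
    Function.Injective ![x, y, z] := by
  intro i j h
  fin_cases i <;> fin_cases j <;> simp_all

end Helpers

/-- Gluing two cubic graphs across a 3-edge-cut: `G` is obtained from the disjoint union
of `G₁ − v₁` and `G₂ − v₂` (where `v₁` has neighbors `a₁, b₁, c₁` and `v₂` has neighbors
`a₂, b₂, c₂`) by adding the edges `a₁a₂`, `b₁b₂`, `c₁c₂`. Then `ν(G) = ν(G₁) · ν(G₂)`. -/
theorem stmt8 {V₁ V₂ : Type*} [Fintype V₁] [Fintype V₂]
    (G₁ : SimpleGraph V₁) (G₂ : SimpleGraph V₂)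
    (h₁ : IsCubic G₁) (h₂ : IsCubic G₂)
    (v₁ a₁ b₁ c₁ : V₁) (v₂ a₂ b₂ c₂ : V₂)
    (hab₁ : a₁ ≠ b₁) (hac₁ : a₁ ≠ c₁) (hbc₁ : b₁ ≠ c₁)
    (hab₂ : a₂ ≠ b₂) (hac₂ : a₂ ≠ c₂) (hbc₂ : b₂ ≠ c₂)
    (hn₁ : G₁.neighborSet v₁ = {a₁, b₁, c₁})
    (hn₂ : G₂.neighborSet v₂ = {a₂, b₂, c₂})
    (G : SimpleGraph ({x : V₁ // x ≠ v₁} ⊕ {x : V₂ // x ≠ v₂}))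
    (hG : ∀ p q : {x : V₁ // x ≠ v₁} ⊕ {x : V₂ // x ≠ v₂}, G.Adj p q ↔
      (∃ u w, p = Sum.inl u ∧ q = Sum.inl w ∧ G₁.Adj u.1 w.1) ∨
      (∃ u w, p = Sum.inr u ∧ q = Sum.inr w ∧ G₂.Adj u.1 w.1) ∨
      (∃ u w, p = Sum.inl u ∧ q = Sum.inr w ∧
        ((u.1 = a₁ ∧ w.1 = a₂) ∨ (u.1 = b₁ ∧ w.1 = b₂) ∨ (u.1 = c₁ ∧ w.1 = c₂))) ∨
      (∃ u w, p = Sum.inr u ∧ q = Sum.inl w ∧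
        ((w.1 = a₁ ∧ u.1 = a₂) ∨ (w.1 = b₁ ∧ u.1 = b₂) ∨ (w.1 = c₁ ∧ u.1 = c₂)))) :
    nu G = nu G₁ * nu G₂ := by
  classical
  have na₁ : ∀ x, G₁.Adj v₁ x ↔ x = a₁ ∨ x = b₁ ∨ x = c₁ := fun x => by
    rw [← SimpleGraph.mem_neighborSet, hn₁]; simp
  have na₂ : ∀ x, G₂.Adj v₂ x ↔ x = a₂ ∨ x = b₂ ∨ x = c₂ := fun x => by
    rw [← SimpleGraph.mem_neighborSet, hn₂]; simp
  have A₁ : ∀ i : Fin 3, (![a₁, b₁, c₁] i) ≠ v₁ := by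
    intro i
    apply SimpleGraph.Adj.ne'
    rw [na₁]
    fin_cases i <;> simp
  have A₂ : ∀ i : Fin 3, (![a₂, b₂, c₂] i) ≠ v₂ := by
    intro i
    apply SimpleGraph.Adj.ne'
    rw [na₂]
    fin_cases i <;> simp
  have I₁ : Function.Injective ![a₁, b₁, c₁] := vec3_inj hab₁ hac₁ hbc₁
  have I₂ : Function.Injective ![a₂, b₂, c₂] := vec3_inj hab₂ hac₂ hbc₂
  have E₁ : ∀ x, G₁.Adj v₁ x ↔ ∃ i : Fin 3, x = ![a₁, b₁, c₁] i := fun x => by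
    rw [na₁, Fin.exists_fin_succ, Fin.exists_fin_two]; simp
  have E₂ : ∀ x, G₂.Adj v₂ x ↔ ∃ i : Fin 3, x = ![a₂, b₂, c₂] i := fun x => by
    rw [na₂, Fin.exists_fin_succ, Fin.exists_fin_two]; simp
  have g11 : ∀ u w, G.Adj (Sum.inl u) (Sum.inl w) ↔ G₁.Adj u.1 w.1 := by
    intro u w; rw [hG]; simp
  have g22 : ∀ u w, G.Adj (Sum.inr u) (Sum.inr w) ↔ G₂.Adj u.1 w.1 := by
    intro u w; rw [hG]; simp
  have g12 : ∀ u w, G.Adj (Sum.inl u) (Sum.inr w) ↔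
      ∃ i : Fin 3, u.1 = ![a₁, b₁, c₁] i ∧ w.1 = ![a₂, b₂, c₂] i := by
    intro u w
    rw [hG, Fin.exists_fin_succ, Fin.exists_fin_two]
    simp
  let α : Fin 3 → {x : V₁ // x ≠ v₁} ⊕ {x : V₂ // x ≠ v₂} := fun i => Sum.inl ⟨_, A₁ i⟩
  let β : Fin 3 → {x : V₁ // x ≠ v₁} ⊕ {x : V₂ // x ≠ v₂} := fun i => Sum.inr ⟨_, A₂ i⟩
  have hαβ : ∀ i, G.Adj (α i) (β i) := fun i => (g12 _ _).mpr ⟨i, rfl, rfl⟩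
  have t : Two G G₁ G₂ v₁ v₂ (Sum.elim (fun x => x.1) (fun _ => v₁))
      (Sum.elim (fun _ => v₂) (fun x => x.1)) α β := by
    refine ⟨⟨?_, ?_, ?_, ?_, ?_, ?_, hαβ, ?_, ?_⟩,
      ⟨?_, ?_, ?_, ?_, ?_, ?_, fun i => (hαβ i).symm, ?_, ?_⟩, ?_, ?_⟩
    · rintro (p | p) (q | q) h h1
      · exact congrArg Sum.inl (Subtype.ext h)
      · exact absurd h p.2
      · exact absurd rfl h1
      · exact absurd rfl h1
    · rintro (p | p) (q | q) h h'
      · exact (g11 _ _).mp h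
      · obtain ⟨i, hi, _⟩ := (g12 _ _).mp h
        exact ((E₁ _).mpr ⟨i, hi⟩).symm
      · obtain ⟨i, hi, _⟩ := (g12 _ _).mp h.symm
        exact (E₁ _).mpr ⟨i, hi⟩
      · exact absurd rfl h'
    · intro x y h
      by_cases hx : x = v₁
      · subst hx
        obtain ⟨i, rfl⟩ := (E₁ _).mp h
        exact ⟨β i, α i, (hαβ i).symm, rfl, rfl⟩
      · by_cases hy : y = v₁
        · subst hy
          obtain ⟨i, rfl⟩ := (E₁ _).mp h.symm
          exact ⟨α i, β i, hαβ i, rfl, rfl⟩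
        · exact ⟨Sum.inl ⟨x, hx⟩, Sum.inl ⟨y, hy⟩, (g11 _ _).mpr h, rfl, rfl⟩
    · intro x hx
      exact ⟨Sum.inl ⟨x, hx⟩, rfl⟩
    · exact A₁
    · intro i; rfl
    · rintro (p | p) (q | q) h h1 h2
      · exact absurd h2 q.2
      · obtain ⟨i, hi, hi'⟩ := (g12 _ _).mp h
        exact ⟨i, congrArg Sum.inl (Subtype.ext hi), congrArg Sum.inr (Subtype.ext hi')⟩
      · exact absurd rfl h1
      · exact absurd rfl h1
    · intro i j h
      exact I₁ (congrArg Subtype.val (Sum.inl.inj h))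
    · rintro (p | p) (q | q) h h1
      · exact absurd rfl h1
      · exact absurd rfl h1
      · exact absurd h p.2
      · exact congrArg Sum.inr (Subtype.ext h)
    · rintro (p | p) (q | q) h h'
      · exact absurd rfl h'
      · obtain ⟨i, _, hi⟩ := (g12 _ _).mp h
        exact (E₂ _).mpr ⟨i, hi⟩
      · obtain ⟨i, _, hi⟩ := (g12 _ _).mp h.symm
        exact ((E₂ _).mpr ⟨i, hi⟩).symm
      · exact (g22 _ _).mp h
    · intro x y h
      by_cases hx : x = v₂
      · subst hx
        obtain ⟨i, rfl⟩ := (E₂ _).mp h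
        exact ⟨α i, β i, hαβ i, rfl, rfl⟩
      · by_cases hy : y = v₂
        · subst hy
          obtain ⟨i, rfl⟩ := (E₂ _).mp h.symm
          exact ⟨β i, α i, (hαβ i).symm, rfl, rfl⟩
        · exact ⟨Sum.inr ⟨x, hx⟩, Sum.inr ⟨y, hy⟩, (g22 _ _).mpr h, rfl, rfl⟩
    · intro x hx
      exact ⟨Sum.inr ⟨x, hx⟩, rfl⟩
    · exact A₂
    · intro i; rfl
    · rintro (p | p) (q | q) h h1 h2
      · exact absurd rfl h1
      · exact absurd rfl h1
      · obtain ⟨i, hi, hi'⟩ := (g12 _ _).mp h.symm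
        exact ⟨i, congrArg Sum.inr (Subtype.ext hi'), congrArg Sum.inl (Subtype.ext hi)⟩
      · exact absurd h2 q.2
    · intro i j h
      exact I₂ (congrArg Subtype.val (Sum.inr.inj h))
    · rintro (p | p) h
      · exact absurd h p.2
      · exact p.2
    · rintro (p | p) h
      · rfl
      · exact absurd rfl h
  exact nu_two t

end CiDC
end
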